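/- arXiv:math/0610326 — 2 statements merged into one kernel-verified Lean document; each statement's English description precedes it below -/
import Mathlib

section
/- Assume a := ess sup ξ₀ < ∞ and Q{ξ₀⁻ > λ} ≤ 1/(log λ)^{2+ε} for all large λ. Set j_k := k^{3k}. Then there exists a constant c > 0 such that for P-almost all ω: liminf_{k→∞} [ ∏_{i=0}^{M(j_k)−2} Q{max_{x∈Θ_i(j_k)} ξ_x⁻ < ε_i(j_k)^{−1/2}} ] · Q{max ξ_x⁻ < ε_{−1}(j_k)^{−1/2}, the max over x ∈ Θ_{−1}(j_k) \ [d⁻(j_{k−1}), d⁺(j_{k−1})]} ≥ c. -/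
open MeasureTheory ProbabilityTheory Filter Set

noncomputable section SinaiSceneryDefs

/-- `γ_i(j) := j^((1-α)^i)`. -/
def gamScale (α : ℝ) (j : ℝ) (i : ℕ) : ℝ := j ^ ((1 - α) ^ i)

/-- `M(j) := inf{n ≥ 0 : γ_n(j) ≤ (log log j)^((1-α)/(2+ε'))}`. -/
def bigM (α ε' : ℝ) (j : ℝ) : ℕ :=
  sInf {n : ℕ | gamScale α j n ≤ (Real.log (Real.log j)) ^ ((1 - α) / (2 + ε'))}

/-- `ε_i(j) := exp(−c₄ γ_{i+2}(j))` for `i ≥ 0` (and `ε_{-1}(j) := ε₀(j)`). -/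
def epsScale (α c₄ : ℝ) (j : ℝ) (i : ℕ) : ℝ := Real.exp (-(c₄ * gamScale α j (i + 2)))

/-- `d⁺(j) := min{n ≥ 0 : V(n) ≥ j}`. -/
def dPlus (v : ℤ → ℝ) (j : ℝ) : ℕ := sInf {n : ℕ | j ≤ v n}

/-- `b⁺(j) := min{n ≥ 0 : V(n) = min_{0 ≤ x ≤ d⁺(j)} V(x)}`. -/
def bPlus (v : ℤ → ℝ) (j : ℝ) : ℕ := sInf {n : ℕ | ∀ m : ℕ, m ≤ dPlus v j → v n ≤ v m}

/-- `ν⁺((−∞,−j]) := min{n ≥ 0 : V(n) ≤ −j}`. -/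
def nuMinus (v : ℤ → ℝ) (j : ℝ) : ℕ := sInf {n : ℕ | v n ≤ -j}

/-- `|d⁻(j)|`, where `d⁻(j) := max{n ≤ 0 : V(n) ≥ j}`. -/
def dMinusAbs (v : ℤ → ℝ) (j : ℝ) : ℕ := sInf {m : ℕ | j ≤ v (-(m : ℤ))}

/-- `|b⁻(j)|`, where `b⁻(j) := max{n ≤ 0 : V(n) = min_{d⁻(j) ≤ x ≤ 0} V(x)}`. -/
def bMinusAbs (v : ℤ → ℝ) (j : ℝ) : ℕ :=
  sInf {m : ℕ | ∀ k : ℕ, k ≤ dMinusAbs v j → v (-(m : ℤ)) ≤ v (-(k : ℤ))}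

/-- The interval of half-width `c·γ_i(j)^{2+ε'}` around `b⁺(j)`, with constant
`c = c₅` for the innermost scale `i = M(j)−1` and `c = c₆` otherwise. -/
def thetaBall (α ε' c₅ c₆ : ℝ) (v : ℤ → ℝ) (j : ℝ) (i : ℕ) : Set ℤ :=
  {x : ℤ | |(x : ℝ) - (bPlus v j : ℝ)| ≤
    (if i = bigM α ε' j - 1 then c₅ else c₆) * gamScale α j i ^ (2 + ε')}

/-- `Θ̄_i(j)`: the `i`-th annulus around `b⁺(j)` (the ball at scale `i` minus the
balls at the finer scales `i+1, …, M(j)−1`). -/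
def thetaBar (α ε' c₅ c₆ : ℝ) (v : ℤ → ℝ) (j : ℝ) (i : ℕ) : Set ℤ :=
  thetaBall α ε' c₅ c₆ v j i \ ⋃ p ∈ Finset.Ioo i (bigM α ε' j), thetaBall α ε' c₅ c₆ v j p

/-- `Θ_i(j) := Θ̄_i(j) ∩ I(j)` with `I(j) = [ν⁺((−∞,−j]), d⁺(j)]`. -/
def thetaSet (α ε' c₅ c₆ : ℝ) (v : ℤ → ℝ) (j : ℝ) (i : ℕ) : Set ℤ :=
  thetaBar α ε' c₅ c₆ v j i ∩ {x : ℤ | (nuMinus v j : ℤ) ≤ x ∧ x ≤ (dPlus v j : ℤ)}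

/-- `Θ_{−1}(j) := [−j^{2+ε'}, j^{2+ε'}] ∩ [d⁻(j), ν⁺((−∞,−j])]`. -/
def thetaNeg (ε' : ℝ) (v : ℤ → ℝ) (j : ℝ) : Set ℤ :=
  {x : ℤ | -(j ^ (2 + ε')) ≤ (x : ℝ) ∧ (x : ℝ) ≤ j ^ (2 + ε') ∧
    -(dMinusAbs v j : ℤ) ≤ x ∧ x ≤ (nuMinus v j : ℤ)}

/-- `A₁^env(j) := {−4j ≤ V(b⁺(j)) ≤ −3j}`. -/
def A1env (v : ℤ → ℝ) (j : ℝ) : Prop := -4 * j ≤ v (bPlus v j) ∧ v (bPlus v j) ≤ -3 * j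

/-- `A₂^env(j) := {max_{0≤x≤y≤b⁺(j)} (V(y)−V(x)) ≤ j/4}`. -/
def A2env (v : ℤ → ℝ) (j : ℝ) : Prop :=
  ∀ x y : ℕ, x ≤ y → y ≤ bPlus v j → v y - v x ≤ j / 4

/-- `A_ann^env(j) := ∩_{i=0}^{M(j)−2} {∑_{x∈Θ_i(j)} e^{−(V(x)−V(b⁺(j)))} ≤ ε_i(j)²}`. -/
def AannEnv (α ε' c₄ c₅ c₆ : ℝ) (v : ℤ → ℝ) (j : ℝ) : Prop :=
  ∀ i : ℕ, i + 2 ≤ bigM α ε' j →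
    ∑' x : thetaSet α ε' c₅ c₆ v j i, Real.exp (-(v x - v (bPlus v j)))
      ≤ epsScale α c₄ j i ^ 2

/-- `B^env(j) := {V(b⁻(j)) ≤ −j/6, max_{d⁻(j)≤x≤y≤0} (V(y)−V(x)) ≤ j/3}`. -/
def Benv (v : ℤ → ℝ) (j : ℝ) : Prop :=
  v (-(bMinusAbs v j : ℤ)) ≤ -j / 6 ∧
    ∀ x y : ℤ, -(dMinusAbs v j : ℤ) ≤ x → x ≤ y → y ≤ 0 → v y - v x ≤ j / 3

/-- `A_i^sce(j) := {max_{x∈Θ_i(j)} ξ_x⁻ < ε_i(j)^{−1/2}}`, `0 ≤ i ≤ M(j)−2`. -/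
def AsceI (α ε' c₄ c₅ c₆ : ℝ) (v ξ : ℤ → ℝ) (j : ℝ) (i : ℕ) : Prop :=
  ∀ x ∈ thetaSet α ε' c₅ c₆ v j i, max (-(ξ x)) 0 < epsScale α c₄ j i ^ (-(1 / 2) : ℝ)

/-- `A_{−1}^sce(j) := {max_{x∈Θ_{−1}(j)} ξ_x⁻ < ε_{−1}(j)^{−1/2}}`. -/
def AsceNeg (α ε' c₄ : ℝ) (v ξ : ℤ → ℝ) (j : ℝ) : Prop :=
  ∀ x ∈ thetaNeg ε' v j, max (-(ξ x)) 0 < epsScale α c₄ j 0 ^ (-(1 / 2) : ℝ)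

/-- `A_{M(j)−1}^sce(j) := {min_{x∈Θ_{M(j)−1}(j)} ξ_x ≥ a − ρ}`. -/
def AsceTop (α ε' c₅ c₆ a ρ : ℝ) (v ξ : ℤ → ℝ) (j : ℝ) : Prop :=
  ∀ x ∈ thetaSet α ε' c₅ c₆ v j (bigM α ε' j - 1), a - ρ ≤ ξ x

/-- The ``good environment-scenery'' event `A(j)`. -/
def goodPair (α ε' c₄ c₅ c₆ a ρ : ℝ) (v ξ : ℤ → ℝ) (j : ℝ) : Prop :=
  A1env v j ∧ A2env v j ∧ AannEnv α ε' c₄ c₅ c₆ v j ∧ Benv v j ∧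
    AsceNeg α ε' c₄ v ξ j ∧
    (∀ i : ℕ, i + 2 ≤ bigM α ε' j → AsceI α ε' c₄ c₅ c₆ v ξ j i) ∧
    AsceTop α ε' c₅ c₆ a ρ v ξ j

end SinaiSceneryDefs

/-- `E_{−1}^sce(j_k)`: the scenery is controlled on
`Θ_{−1}(j_k) \ [d⁻(j_{k−1}), d⁺(j_{k−1})]`. -/
def EsceNeg (α ε' c₄ : ℝ) (v ξ : ℤ → ℝ) (j jprev : ℝ) : Prop :=
  ∀ x ∈ thetaNeg ε' v j,
    ¬(-(dMinusAbs v jprev : ℤ) ≤ x ∧ x ≤ (dPlus v jprev : ℤ)) →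
      max (-(ξ x)) 0 < epsScale α c₄ j 0 ^ (-(1 / 2) : ℝ)

/-!
For a fixed environment the lemma is a union bound over the scenery. On a ball of radius of order
`g ^ (2 + ε')` some `ξ_x⁻` reaches `exp (c₄ * g ^ ((1 - α) ^ 2) / 2)` with probability at most
of order `g ^ (-β) = O(1 / log g)`, where `β := (1 - α) ^ 2 * (2 + ε) - (2 + ε') > 0`. At the scales
`g = γ_i(j)` one has `log g = (1 - α) ^ i * log j`, so that the errors form a geometric series
dominated by its last term. The definition of `M(j)` keeps `γ_{M(j)-1}(j)` above a cut-off that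
tends to infinity; hence the product of probabilities tends to `1`.
-/

open Metric Topology

section Inequalities

lemma one_sub_sum_one_sub_le_prod {ι R : Type*} [CommRing R] [LinearOrder R]
    [IsStrictOrderedRing R] (s : Finset ι) {f : ι → R} (h0 : ∀ i ∈ s, 0 ≤ f i)
    (h1 : ∀ i ∈ s, f i ≤ 1) : 1 - ∑ i ∈ s, (1 - f i) ≤ ∏ i ∈ s, f i := by
  induction s using Finset.cons_induction with
  | empty => simp
  | cons a s ha ih =>
    rw [Finset.forall_mem_cons] at h0 h1
    rw [Finset.sum_cons, Finset.prod_cons]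
    have hprod_ge := ih h0.2 h1.2
    have hprod_le := Finset.prod_le_one h0.2 h1.2
    have hcross : 0 ≤ (1 - f a) * (1 - ∏ i ∈ s, f i) :=
      mul_nonneg (sub_nonneg.2 h1.1) (sub_nonneg.2 hprod_le)
    linarith

lemma sum_range_inv_pow_le {r : ℝ} (hr0 : 0 < r) (hr1 : r < 1) (n : ℕ) :
    ∑ i ∈ Finset.range n, (r ^ i)⁻¹ ≤ (r ^ n)⁻¹ / (1 - r) := by
  have hr : 0 < 1 - r := sub_pos.2 hr1
  induction n with
  | zero => simpa using hr1.le
  | succ n ih =>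
    calc ∑ i ∈ Finset.range (n + 1), (r ^ i)⁻¹
        ≤ (r ^ n)⁻¹ / (1 - r) + (r ^ n)⁻¹ := by
          rw [Finset.sum_range_succ]
          gcongr
      _ = (2 - r) * r * ((r ^ (n + 1))⁻¹ / (1 - r)) := by
          field_simp
          ring
      _ ≤ (r ^ (n + 1))⁻¹ / (1 - r) :=
          mul_le_of_le_one_left (by positivity) (by nlinarith [sq_nonneg (1 - r)])

lemma mul_rpow_add_one_mul_inv_rpow_le {g p r c : ℝ} (hg : 1 < g) (hp : 0 ≤ p) (hpr : p < r)
    (hc : 0 ≤ c) : (c * g ^ p + 1) * (g ^ r)⁻¹ ≤ (c + 1) / (r - p) / Real.log g := by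
  have hg0 : 0 < g := zero_lt_one.trans hg
  have hβ : 0 < r - p := sub_pos.2 hpr
  have hlog : 0 < Real.log g := Real.log_pos hg
  calc (c * g ^ p + 1) * (g ^ r)⁻¹
      ≤ (c * g ^ p + g ^ p) * (g ^ r)⁻¹ := by
        gcongr
        exact Real.one_le_rpow hg.le hp
    _ = (c + 1) * (g ^ (r - p))⁻¹ := by
        rw [Real.rpow_sub hg0, inv_div]
        ring
    _ ≤ (c + 1) * ((r - p) * Real.log g)⁻¹ := by
        gcongr
        rw [mul_comm, ← le_div_iff₀ hβ]
        exact Real.log_le_rpow_div hg0.le hβ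
    _ = (c + 1) / (r - p) / Real.log g := by rw [div_div, div_eq_mul_inv]

end Inequalities

section Limits

lemma tendsto_one_of_one_sub_div_log_le {ι : Type*} {l : Filter ι} {f g : ι → ℝ} {K : ℝ}
    (hg : Tendsto g l atTop) (hlower : ∀ᶠ k in l, 1 - K / Real.log (g k) ≤ f k)
    (hupper : ∀ k, f k ≤ 1) : Tendsto f l (𝓝 1) := by
  have hlimit : Tendsto (fun k ↦ 1 - K / Real.log (g k)) l (𝓝 1) := by
    simpa using ((Real.tendsto_log_atTop.comp hg).const_div_atTop K).const_sub 1
  exact tendsto_of_tendsto_of_tendsto_of_le_of_le' hlimit tendsto_const_nhds hlower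
    (Eventually.of_forall hupper)

lemma tendsto_natCast_pow_mul_self_atTop {m : ℕ} (hm : m ≠ 0) :
    Tendsto (fun k : ℕ ↦ (k : ℝ) ^ (m * k)) atTop atTop := by
  refine tendsto_atTop_mono' atTop ?_ tendsto_natCast_atTop_atTop
  filter_upwards [eventually_ge_atTop 1] with k hk
  exact le_self_pow₀ (by exact_mod_cast hk) (by positivity)

end Limits

section UnionBound

variable {Ω : Type*} [MeasurableSpace Ω] {μ : Measure Ω} [IsProbabilityMeasure μ]

lemma one_sub_card_mul_le_measureReal_forall {ι : Type*} (s : Finset ι) {P : ι → Ω → Prop} {p : ℝ}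
    (hp : ∀ i ∈ s, μ.real {ω | ¬P i ω} ≤ p) :
    1 - s.card * p ≤ μ.real {ω | ∀ i ∈ s, P i ω} := by
  have hcompl : {ω | ∀ i ∈ s, P i ω}ᶜ = ⋃ i ∈ s, {ω | ¬P i ω} := by
    ext ω
    simp
  have hunion : μ.real {ω | ∀ i ∈ s, P i ω}ᶜ ≤ s.card * p := calc
    μ.real {ω | ∀ i ∈ s, P i ω}ᶜ ≤ ∑ i ∈ s, μ.real {ω | ¬P i ω} :=
      hcompl ▸ measureReal_biUnion_finset_le _ _
    _ ≤ s.card * p := by simpa using Finset.sum_le_card_nsmul s _ p hp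
  have htotal := measureReal_union_le (μ := μ) {ω | ∀ i ∈ s, P i ω} {ω | ∀ i ∈ s, P i ω}ᶜ
  rw [union_compl_self, probReal_univ] at htotal
  linarith

lemma card_Icc_ceil_floor_le (b : ℝ) {R : ℝ} (hR : 0 ≤ R) :
    ((Finset.Icc ⌈b - R⌉ ⌊b + R⌋).card : ℝ) ≤ 2 * R + 1 := by
  have hfloor := Int.floor_le (b + R)
  have hceil := Int.le_ceil (b - R)
  rw [Int.card_Icc, ← Int.cast_natCast, Int.toNat_eq_max, Int.cast_max]
  push_cast
  exact max_le (by linarith) (by linarith)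

lemma one_sub_mul_le_measureReal_forall_of_subset_closedBall {P : ℤ → Ω → Prop} {p R : ℝ} {b : ℤ}
    {s : Set ℤ} (hR : 0 ≤ R) (hs : s ⊆ closedBall b R) (hp : ∀ x, μ.real {ω | ¬P x ω} ≤ p) :
    1 - (2 * R + 1) * p ≤ μ.real {ω | ∀ x ∈ s, P x ω} := by
  have hp0 : 0 ≤ p := measureReal_nonneg.trans (hp 0)
  set t := Finset.Icc ⌈(b : ℝ) - R⌉ ⌊(b : ℝ) + R⌋ with ht
  have hst : ∀ x ∈ s, x ∈ t := fun x hx ↦ by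
    simpa only [ht, Int.closedBall_eq_Icc, Finset.mem_Icc, mem_Icc] using hs hx
  calc 1 - (2 * R + 1) * p
      ≤ 1 - t.card * p := by
        gcongr
        exact card_Icc_ceil_floor_le b hR
    _ ≤ μ.real {ω | ∀ x ∈ t, P x ω} := one_sub_card_mul_le_measureReal_forall t fun x _ ↦ hp x
    _ ≤ μ.real {ω | ∀ x ∈ s, P x ω} := measureReal_mono fun ω hω x hx ↦ hω x (hst x hx)

end UnionBound

section LogTail

variable {Ω : Type*} [MeasurableSpace Ω] {μ : Measure Ω} {q : ℝ}

/-- The negative parts of the family `ξ` have tails at most `(log lam) ^ (-q)` for all large `lam`,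
uniformly in the index. For a family of identically distributed variables this is the tail
assumption of the paper, with `q = 2 + ε`. -/
def HasLogNegTail {ι : Type*} (μ : Measure Ω) (ξ : ι → Ω → ℝ) (q : ℝ) : Prop :=
  ∀ᶠ lam in atTop, ∀ x, μ.real {ω | lam < max (-(ξ x ω)) 0} ≤ 1 / Real.log lam ^ q

lemma hasLogNegTail_of_identDistrib {ι : Type*} {ξ : ι → Ω → ℝ} {x₀ : ι}
    (hident : ∀ x, IdentDistrib (ξ x) (ξ x₀) μ μ)
    (htail : ∀ᶠ lam in atTop, μ.real {ω | lam < max (-(ξ x₀ ω)) 0} ≤ 1 / Real.log lam ^ q) :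
    HasLogNegTail μ ξ q := by
  filter_upwards [htail] with lam hlam x
  have hmeas : MeasurableSet {y : ℝ | lam < max (-y) 0} :=
    measurableSet_lt measurable_const (by fun_prop)
  have heq : μ.real {ω | lam < max (-(ξ x ω)) 0} = μ.real {ω | lam < max (-(ξ x₀ ω)) 0} :=
    congrArg ENNReal.toReal ((hident x).measure_mem_eq hmeas)
  rwa [heq]

lemma HasLogNegTail.eventually_measureReal_not_lt_exp_le [IsFiniteMeasure μ] {ι : Type*}
    {ξ : ι → Ω → ℝ} (hξ : HasLogNegTail μ ξ q) :
    ∀ᶠ t in atTop, ∀ x, μ.real {ω | ¬max (-(ξ x ω)) 0 < Real.exp t} ≤ 1 / (t / 2) ^ q := by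
  -- Halving the exponent makes the inequality strict, as the tail assumption requires.
  have hhalf : Tendsto (fun t : ℝ ↦ Real.exp (t / 2)) atTop atTop :=
    Real.tendsto_exp_atTop.comp (tendsto_id.atTop_div_const two_pos)
  filter_upwards [hhalf.eventually hξ, eventually_gt_atTop 0] with t htail ht x
  rw [Real.log_exp] at htail
  refine (measureReal_mono fun ω hω ↦ ?_).trans (htail x)
  exact (Real.exp_lt_exp.2 (half_lt_self ht)).trans_le (not_lt.1 hω)

lemma HasLogNegTail.exists_one_sub_div_log_le [IsProbabilityMeasure μ] {ξ : ℤ → Ω → ℝ}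
    {p θ κ c : ℝ} (hξ : HasLogNegTail μ ξ q) (hp : 0 ≤ p) (hθ : 0 < θ) (hpq : p < θ * q)
    (hκ : 0 < κ) (hc : 0 ≤ c) :
    ∃ K, 0 ≤ K ∧ ∀ᶠ g in atTop, ∀ (b : ℤ) (s : Set ℤ), s ⊆ closedBall b (c * g ^ p) →
      1 - K / Real.log g ≤ μ.real {ω | ∀ x ∈ s, max (-(ξ x ω)) 0 < Real.exp (κ * g ^ θ)} := by
  refine ⟨(2 / κ) ^ q * ((2 * c + 1) / (θ * q - p)),
    mul_nonneg (by positivity) (div_nonneg (by positivity) (sub_pos.2 hpq).le), ?_⟩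
  have hexp : Tendsto (fun g : ℝ ↦ κ * g ^ θ) atTop atTop :=
    (tendsto_rpow_atTop hθ).const_mul_atTop hκ
  filter_upwards [hexp.eventually hξ.eventually_measureReal_not_lt_exp_le,
    eventually_gt_atTop 1] with g htail hg b s hs
  have hg0 : 0 < g := zero_lt_one.trans hg
  have hsite : 1 / (κ * g ^ θ / 2) ^ q = (2 / κ) ^ q * (g ^ (θ * q))⁻¹ := by
    rw [Real.rpow_mul hg0.le, one_div, ← Real.inv_rpow (by positivity),
      ← Real.inv_rpow (by positivity), ← Real.mul_rpow (by positivity) (by positivity)]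
    congr 1
    field_simp
  have herror : (2 * (c * g ^ p) + 1) * (1 / (κ * g ^ θ / 2) ^ q)
      ≤ (2 / κ) ^ q * ((2 * c + 1) / (θ * q - p)) / Real.log g := calc
    (2 * (c * g ^ p) + 1) * (1 / (κ * g ^ θ / 2) ^ q)
      = (2 / κ) ^ q * ((2 * c * g ^ p + 1) * (g ^ (θ * q))⁻¹) := by rw [hsite]; ring
    _ ≤ (2 / κ) ^ q * ((2 * c + 1) / (θ * q - p) / Real.log g) := by
      gcongr
      exact mul_rpow_add_one_mul_inv_rpow_le hg hp hpq (by positivity)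
    _ = (2 / κ) ^ q * ((2 * c + 1) / (θ * q - p)) / Real.log g := by ring
  have hunion := one_sub_mul_le_measureReal_forall_of_subset_closedBall (by positivity) hs htail
  linarith

end LogTail

section Scales

variable {α ε' c₄ c₅ c₆ j : ℝ}

/-- The cut-off `(log log j) ^ ((1 - α) / (2 + ε'))` in the definition of `M(j)`, below which the
scales `γ_i(j)` are no longer resolved. -/
noncomputable def cutoffScale (α ε' j : ℝ) : ℝ :=
  (Real.log (Real.log j)) ^ ((1 - α) / (2 + ε'))

lemma tendsto_cutoffScale_atTop (hα : α < 1) (hε' : 0 < 2 + ε') :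
    Tendsto (cutoffScale α ε') atTop atTop :=
  (tendsto_rpow_atTop (div_pos (sub_pos.2 hα) hε')).comp
    (Real.tendsto_log_atTop.comp Real.tendsto_log_atTop)

lemma cutoffScale_lt_gamScale {i : ℕ} (hi : i < bigM α ε' j) :
    cutoffScale α ε' j < gamScale α j i :=
  not_le.1 (Nat.notMem_of_lt_sInf hi)

lemma gamScale_zero : gamScale α j 0 = j := by
  simp [gamScale]

lemma log_gamScale (hj : 0 < j) (i : ℕ) :
    Real.log (gamScale α j i) = Real.log j * (1 - α) ^ i := by
  rw [gamScale, Real.log_rpow hj, mul_comm]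

lemma epsScale_rpow_neg_half (hj : 0 ≤ j) (i : ℕ) :
    epsScale α c₄ j i ^ (-(1 / 2) : ℝ) = Real.exp (c₄ / 2 * gamScale α j i ^ ((1 - α) ^ 2)) := by
  rw [epsScale, gamScale, gamScale, ← Real.exp_mul, ← Real.rpow_mul hj, ← pow_add]
  ring_nf

lemma thetaSet_subset_closedBall {v : ℤ → ℝ} {i : ℕ} (hi : i < bigM α ε' j - 1) :
    thetaSet α ε' c₅ c₆ v j i ⊆ closedBall (bPlus v j : ℤ) (c₆ * gamScale α j i ^ (2 + ε')) := by
  rintro x ⟨⟨hx, -⟩, -⟩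
  rwa [thetaBall, mem_ofPred_eq, if_neg hi.ne] at hx

lemma thetaNeg_subset_closedBall {v : ℤ → ℝ} :
    thetaNeg ε' v j ⊆ closedBall (0 : ℤ) (j ^ (2 + ε')) := by
  rintro x ⟨hlower, hupper, -⟩
  rw [mem_closedBall, Int.dist_eq, Int.cast_zero, sub_zero]
  exact abs_le.2 ⟨hlower, hupper⟩

lemma sum_div_log_gamScale_le {K : ℝ} (hα0 : 0 < α) (hα1 : α < 1) (hK : 0 ≤ K) (hj : 1 < j)
    (hS : 1 < cutoffScale α ε' j) :
    ∑ i ∈ Finset.range (bigM α ε' j - 1), K / Real.log (gamScale α j i)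
      ≤ K / α / Real.log (cutoffScale α ε' j) := by
  have hlogj : 0 < Real.log j := Real.log_pos hj
  have hlogS : 0 < Real.log (cutoffScale α ε' j) := Real.log_pos hS
  obtain hM | hM := Nat.eq_zero_or_pos (bigM α ε' j - 1)
  · rw [hM, Finset.range_zero, Finset.sum_empty]
    positivity
  have hlast : Real.log (cutoffScale α ε' j) ≤ Real.log (gamScale α j (bigM α ε' j - 1)) :=
    Real.log_le_log (by positivity) (cutoffScale_lt_gamScale (by omega)).le
  have hj0 : 0 < j := zero_lt_one.trans hj
  calc ∑ i ∈ Finset.range (bigM α ε' j - 1), K / Real.log (gamScale α j i)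
      = K / Real.log j * ∑ i ∈ Finset.range (bigM α ε' j - 1), ((1 - α) ^ i)⁻¹ := by
        simp only [Finset.mul_sum, log_gamScale hj0, div_eq_mul_inv, mul_inv, mul_assoc]
    _ ≤ K / Real.log j * (((1 - α) ^ (bigM α ε' j - 1))⁻¹ / (1 - (1 - α))) := by
        gcongr
        exact sum_range_inv_pow_le (sub_pos.2 hα1) (sub_lt_self _ hα0) _
    _ = K / α / Real.log (gamScale α j (bigM α ε' j - 1)) := by
        rw [log_gamScale hj0, sub_sub_cancel]
        ring
    _ ≤ K / α / Real.log (cutoffScale α ε' j) := by gcongr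

end Scales

section Scenery

variable {Ω : Type*} [MeasurableSpace Ω] {μ : Measure Ω} [IsProbabilityMeasure μ]
  {ξ : ℤ → Ω → ℝ} {ε ε' α c₄ : ℝ}

lemma HasLogNegTail.exists_one_sub_le_measureReal_EsceNeg (hξ : HasLogNegTail μ ξ (2 + ε))
    (hα1 : α < 1) (hε' : 0 < 2 + ε') (hβ : 0 < (1 - α) ^ 2 * (2 + ε) - (2 + ε')) (hc₄ : 0 < c₄) :
    ∃ K, ∀ᶠ j in atTop, ∀ v jprev, 1 - K / Real.log j ≤
      μ.real {ω | EsceNeg α ε' c₄ v (fun x ↦ ξ x ω) j jprev} := by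
  obtain ⟨K, -, hball⟩ := hξ.exists_one_sub_div_log_le hε'.le (pow_pos (sub_pos.2 hα1) 2)
    (sub_pos.1 hβ) (half_pos hc₄) zero_le_one
  refine ⟨K, ?_⟩
  filter_upwards [hball, eventually_ge_atTop 0] with j hj hj0 v jprev
  rw [one_mul] at hj
  refine (hj 0 (thetaNeg ε' v j) thetaNeg_subset_closedBall).trans
    (measureReal_mono fun ω hω x hx _ ↦ ?_)
  rw [epsScale_rpow_neg_half hj0, gamScale_zero]
  exact hω x hx

lemma HasLogNegTail.exists_one_sub_le_prod_measureReal_AsceI {c₆ : ℝ}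
    (hξ : HasLogNegTail μ ξ (2 + ε)) (hα0 : 0 < α) (hα1 : α < 1) (hε' : 0 < 2 + ε')
    (hβ : 0 < (1 - α) ^ 2 * (2 + ε) - (2 + ε')) (hc₄ : 0 < c₄) (hc₆ : 0 ≤ c₆) (c₅ : ℝ) :
    ∃ K, ∀ᶠ j in atTop, ∀ v, 1 - K / Real.log (cutoffScale α ε' j) ≤
      ∏ i ∈ Finset.range (bigM α ε' j - 1),
        μ.real {ω | AsceI α ε' c₄ c₅ c₆ v (fun x ↦ ξ x ω) j i} := by
  obtain ⟨K, hK, hball⟩ := hξ.exists_one_sub_div_log_le hε'.le (pow_pos (sub_pos.2 hα1) 2)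
    (sub_pos.1 hβ) (half_pos hc₄) hc₆
  obtain ⟨G, hG⟩ := eventually_atTop.1 hball
  refine ⟨K / α, ?_⟩
  have hS := tendsto_cutoffScale_atTop hα1 hε'
  filter_upwards [hS.eventually_ge_atTop G, hS.eventually_gt_atTop 1,
    eventually_gt_atTop 1] with j hGS hS1 hj v
  have hfactor : ∀ i ∈ Finset.range (bigM α ε' j - 1),
      1 - μ.real {ω | AsceI α ε' c₄ c₅ c₆ v (fun x ↦ ξ x ω) j i}
        ≤ K / Real.log (gamScale α j i) := fun i hi ↦ by
    rw [Finset.mem_range] at hi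
    have hγ : G ≤ gamScale α j i := hGS.trans (cutoffScale_lt_gamScale (by omega)).le
    have hprob := hG _ hγ _ _ (thetaSet_subset_closedBall (c₅ := c₅) (v := v) hi)
    rw [← epsScale_rpow_neg_half (zero_le_one.trans hj.le)] at hprob
    exact sub_le_comm.1 hprob
  calc 1 - K / α / Real.log (cutoffScale α ε' j)
      ≤ 1 - ∑ i ∈ Finset.range (bigM α ε' j - 1), K / Real.log (gamScale α j i) :=
        sub_le_sub_left (sum_div_log_gamScale_le hα0 hα1 hK hj hS1) 1
    _ ≤ 1 - ∑ i ∈ Finset.range (bigM α ε' j - 1),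
          (1 - μ.real {ω | AsceI α ε' c₄ c₅ c₆ v (fun x ↦ ξ x ω) j i}) :=
        sub_le_sub_left (Finset.sum_le_sum hfactor) 1
    _ ≤ _ := one_sub_sum_one_sub_le_prod _ (fun _ _ ↦ measureReal_nonneg)
        (fun _ _ ↦ measureReal_le_one)

theorem stmt14_general {ι : Type*} {l : Filter ι} {c₆ : ℝ} (hξ : HasLogNegTail μ ξ (2 + ε))
    (hα0 : 0 < α) (hα1 : α < 1) (hε' : 0 < 2 + ε')
    (hβ : 0 < (1 - α) ^ 2 * (2 + ε) - (2 + ε')) (hc₄ : 0 < c₄) (c₅ : ℝ) (hc₆ : 0 ≤ c₆)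
    (v : ι → ℤ → ℝ) {j : ι → ℝ} (hj : Tendsto j l atTop) (jprev : ι → ℝ) :
    Tendsto (fun k ↦
      (∏ i ∈ Finset.range (bigM α ε' (j k) - 1),
        μ.real {ω | AsceI α ε' c₄ c₅ c₆ (v k) (fun x ↦ ξ x ω) (j k) i}) *
      μ.real {ω | EsceNeg α ε' c₄ (v k) (fun x ↦ ξ x ω) (j k) (jprev k)}) l (𝓝 1) := by
  obtain ⟨K₁, hprod⟩ :=
    hξ.exists_one_sub_le_prod_measureReal_AsceI hα0 hα1 hε' hβ hc₄ hc₆ c₅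
  obtain ⟨K₂, hneg⟩ := hξ.exists_one_sub_le_measureReal_EsceNeg hα1 hε' hβ hc₄
  rw [← one_mul (1 : ℝ)]
  refine (tendsto_one_of_one_sub_div_log_le (K := K₁)
    ((tendsto_cutoffScale_atTop hα1 hε').comp hj) ?_ fun k ↦ ?_).mul
    (tendsto_one_of_one_sub_div_log_le (K := K₂) hj ?_ fun k ↦ measureReal_le_one)
  · filter_upwards [hj.eventually hprod] with k hk using hk (v k)
  · exact Finset.prod_le_one (fun _ _ ↦ measureReal_nonneg) fun _ _ ↦ measureReal_le_one
  · filter_upwards [hj.eventually hneg] with k hk using hk (v k) (jprev k)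

end Scenery

/-- Lemma 5.2: there is `c > 0` such that for `P`-almost all `ω`,
`liminf_{k→∞} ∏_{i=0}^{M(j_k)−2} Q{max_{x∈Θ_i(j_k)} ξ_x⁻ < ε_i(j_k)^{−1/2}}
· Q{max_{x ∈ Θ_{−1}(j_k) \ [d⁻(j_{k−1}), d⁺(j_{k−1})]} ξ_x⁻ < ε_{−1}(j_k)^{−1/2}} ≥ c`
(with `j_k := k^{3k}`). -/
theorem stmt14 {Ω₁ Ω₂ : Type*} [MeasurableSpace Ω₁] [MeasurableSpace Ω₂]
    (μP : Measure Ω₁) [IsProbabilityMeasure μP]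
    (μQ : Measure Ω₂) [IsProbabilityMeasure μQ]
    -- the i.i.d. environment
    (env : ℤ → Ω₁ → ℝ) (henv_meas : ∀ i, Measurable (env i))
    (henv_indep : iIndepFun (m := fun _ : ℤ => (inferInstance : MeasurableSpace ℝ)) env μP)
    (henv_ident : ∀ i, IdentDistrib (env i) (env 0) μP μP)
    (δ : ℝ) (hδ0 : 0 < δ) (hδ1 : δ < 1 / 2)
    (henv_ell : ∀ i, ∀ᵐ ω ∂μP, δ ≤ env i ω ∧ env i ω ≤ 1 - δ)
    (henv_mean : ∫ ω, Real.log ((1 - env 0 ω) / env 0 ω) ∂μP = 0)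
    (henv_var : 0 < variance (fun ω => Real.log ((1 - env 0 ω) / env 0 ω)) μP)
    -- the potential
    (V : ℤ → Ω₁ → ℝ)
    (hV_pos : ∀ (x : ℤ), 0 ≤ x → ∀ ω, V x ω =
      ∑ i ∈ Finset.range x.toNat, Real.log ((1 - env ((i : ℤ) + 1) ω) / env ((i : ℤ) + 1) ω))
    (hV_neg : ∀ (x : ℤ), x < 0 → ∀ ω, V x ω =
      -∑ i ∈ Finset.range (-x).toNat,
        Real.log ((1 - env (x + 1 + (i : ℤ)) ω) / env (x + 1 + (i : ℤ)) ω))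
    -- the i.i.d. scenery
    (sce : ℤ → Ω₂ → ℝ) (hsce_meas : ∀ x, Measurable (sce x))
    (hsce_indep : iIndepFun (m := fun _ : ℤ => (inferInstance : MeasurableSpace ℝ)) sce μQ)
    (hsce_ident : ∀ x, IdentDistrib (sce x) (sce 0) μQ μQ)
    -- `a := ess sup ξ₀ < ∞` and thin negative tails
    (a : ℝ) (ha : a = essSup (fun ω => sce 0 ω) μQ) (ha_fin : ∀ᵐ ω ∂μQ, sce 0 ω ≤ a)
    (ε : ℝ) (hε : 0 < ε) (lam₀ : ℝ) (hlam₀ : 1 < lam₀)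
    (htail : ∀ lam : ℝ, lam₀ ≤ lam →
      (μQ {ω | lam < max (-(sce 0 ω)) 0}).toReal ≤ 1 / Real.log lam ^ (2 + ε : ℝ))
    -- the scale parameters
    (ε' α c₄ c₅ c₆ : ℝ)
    (hε' : ε' = min (1 / 35) (ε / 2))
    (hα0 : 0 < α) (hα1 : α < 1)
    (hβ : 0 < (1 - α) ^ 2 * (2 + ε) - (2 + ε'))
    (hβ' : 0 < ε' / 2 - α)
    (hc₄0 : 0 < c₄) (hc₄1 : c₄ < 1 / 6)
    (hc₅0 : 0 < c₅) (hc₅1 : c₅ < 1)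
    (hc₆ : max 1 (2 * (1 + 2 / (2 + ε'))) ≤ c₆) :
    ∃ c : ℝ, 0 < c ∧ ∀ᵐ ω₁ ∂μP,
      c ≤ Filter.atTop.liminf (fun k : ℕ =>
        (∏ i ∈ Finset.range (bigM α ε' ((k : ℝ) ^ (3 * k)) - 1),
          (μQ {ω₂ | AsceI α ε' c₄ c₅ c₆ (fun x => V x ω₁) (fun x => sce x ω₂)
            ((k : ℝ) ^ (3 * k)) i}).toReal) *
        (μQ {ω₂ | EsceNeg α ε' c₄ (fun x => V x ω₁) (fun x => sce x ω₂)
          ((k : ℝ) ^ (3 * k)) (((k - 1 : ℕ) : ℝ) ^ (3 * (k - 1)))}).toReal) := by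
  have hε'0 : 0 < ε' := hε' ▸ lt_min (by norm_num) (half_pos hε)
  have hξ : HasLogNegTail μQ sce (2 + ε) :=
    hasLogNegTail_of_identDistrib hsce_ident (eventually_atTop.2 ⟨lam₀, htail⟩)
  have hc₆0 : 0 ≤ c₆ := zero_le_one.trans ((le_max_left _ _).trans hc₆)
  exact ⟨1, one_pos, .of_forall fun ω₁ ↦ (stmt14_general hξ hα0 hα1 (by positivity) hβ hc₄0 c₅ hc₆0
    _ (tendsto_natCast_pow_mul_self_atTop three_ne_zero) _).liminf_eq.ge⟩
end

section
/- Assume a := ess sup ξ₀ < ∞. Then for every c ∈ [−∞, +∞], the probability ℙ⊗Q{limsup_{n→∞} Z_n/n = c} is either 0 or 1. -/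
open MeasureTheory ProbabilityTheory Filter Set

/-- Nearest-neighbour transition probability of Sinai's walk: from `x`, a step `s`
has probability `p` if `s = 1`, `1 − p` if `s = −1`, and `0` otherwise, where
`p = ω_x` is the environment at the current site. -/
noncomputable def stepProb (p : ℝ) (s : ℤ) : ℝ :=
  if s = 1 then p else if s = -1 then 1 - p else 0

/-!
For a fixed scenery and a fixed environment, the quenched probability of a shift-invariant event is
a harmonic function of the starting point of the walk. The increments of a harmonic function are
proportional to the exponential of the potential, so a nonconstant bounded one forces the potential
to tend to `-∞` in both directions. In an i.i.d. environment this is impossible: by ergodicity the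
potential tends to `-∞` at `+∞` with probability `0` or `1`, and if this probability is `1` then, by
reflection of the environment, the potential almost surely tends to `+∞` at `-∞`. Hence the quenched
probability does not depend on the starting point, so that it is `0` or `1` (Lévy's argument) and
invariant under a simultaneous shift of the scenery and of the environment. This shift is a product
of two Bernoulli shifts; it is strongly mixing, hence ergodic, and the quenched probability is
almost surely constant.
-/

open scoped ENNReal Topology

section LimsupAverage

lemma limsup_mul_add_le {ι : Type*} {l : Filter ι} {r u d : ι → ℝ} (hr : Tendsto r l (𝓝 1))
    (hd : Tendsto d l (𝓝 0)) :
    limsup (fun n => ((r n * u n + d n : ℝ) : EReal)) l ≤ limsup (fun n => (u n : EReal)) l := by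
  refine le_of_forall_gt_imp_ge_of_dense fun b hb => ?_
  obtain ⟨b', hub', hb'b⟩ := EReal.exists_between_coe_real hb
  have hlim : Tendsto (fun n => ((r n * b' + d n : ℝ) : EReal)) l (𝓝 (b' : EReal)) :=
    (continuous_coe_real_ereal.tendsto b').comp (by simpa using (hr.mul_const b').add hd)
  refine limsup_le_of_le (by isBoundedDefault) ?_
  filter_upwards [eventually_lt_of_limsup_lt hub', hlim.eventually_lt_const hb'b,
    hr.eventually_const_lt one_pos] with n hu hb hr
  have hu : u n ≤ b' := by exact_mod_cast hu.le
  refine le_trans (EReal.coe_le_coe ?_) hb.le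
  gcongr

lemma limsup_mul_add {ι : Type*} {l : Filter ι} {r u d : ι → ℝ} (hr : Tendsto r l (𝓝 1))
    (hd : Tendsto d l (𝓝 0)) :
    limsup (fun n => ((r n * u n + d n : ℝ) : EReal)) l = limsup (fun n => (u n : EReal)) l := by
  refine le_antisymm (limsup_mul_add_le hr hd) ?_
  have hr' : Tendsto (fun n => (r n)⁻¹) l (𝓝 1) := by simpa using hr.inv₀ one_ne_zero
  have hd' : Tendsto (fun n => -((r n)⁻¹ * d n)) l (𝓝 0) := by simpa using (hr'.mul hd).neg
  refine le_of_eq_of_le (limsup_congr ?_) (limsup_mul_add_le hr' hd')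
  filter_upwards [hr.eventually_ne one_ne_zero] with n hn
  congr 1
  field_simp
  ring

/-- The limit superior of `(u 0 + ⋯ + u n) / n`, the normalisation of `Z_n / n`. -/
noncomputable def limsupAverage (u : ℕ → ℝ) : EReal :=
  limsup (fun n : ℕ => (((∑ i ∈ Finset.range (n + 1), u i) / (n : ℝ) : ℝ) : EReal)) atTop

lemma measurable_limsupAverage : Measurable limsupAverage :=
  Measurable.limsup fun _ => by fun_prop

lemma limsupAverage_comp_succ (u : ℕ → ℝ) :
    limsupAverage (fun i => u (i + 1)) = limsupAverage u := by
  have hr : Tendsto (fun n : ℕ => 1 + 1 / (n : ℝ)) atTop (𝓝 1) := by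
    simpa using tendsto_const_nhds.add (tendsto_one_div_atTop_nhds_zero_nat (𝕜 := ℝ))
  have hd : Tendsto (fun n : ℕ => -u 0 / n) atTop (𝓝 0) := tendsto_const_div_atTop_nhds_zero_nat _
  unfold limsupAverage
  rw [← limsup_nat_add (fun n : ℕ => (((∑ i ∈ Finset.range (n + 1), u i) / n : ℝ) : EReal)) 1]
  refine (limsup_congr ?_).trans (limsup_mul_add hr hd)
  filter_upwards [eventually_ne_atTop 0] with n hn
  rw [Finset.sum_range_succ' u (n + 1)]
  congr 1
  push_cast
  field_simp
  ring

end LimsupAverage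

section StronglyMixing

variable {α β : Type*} [mα : MeasurableSpace α] [mβ : MeasurableSpace β]

lemma hasSum_measureReal_iUnion {ι : Type*} [Countable ι] (P : Measure α) [IsFiniteMeasure P]
    {f : ι → Set α} (hdisj : Pairwise (Function.onFun Disjoint f))
    (hmeas : ∀ i, MeasurableSet (f i)) :
    HasSum (fun i => P.real (f i)) (P.real (⋃ i, f i)) := by
  have hfin : ∑' i, P (f i) ≠ ∞ := measure_iUnion hdisj hmeas ▸ measure_ne_top _ _
  rw [measureReal_def, measure_iUnion hdisj hmeas, ENNReal.tsum_toReal_eq fun i => by finiteness]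
  exact ENNReal.hasSum_toReal hfin

lemma tendsto_measureReal_of_isPiSystem {ι : Type*} {l : Filter ι} {ρ : ι → Measure α}
    {P ν : Measure α} [IsFiniteMeasure P] [IsFiniteMeasure ν] (hle : ∀ k, ρ k ≤ P)
    {𝒞 : Set (Set α)} (hgen : mα = MeasurableSpace.generateFrom 𝒞) (hpi : IsPiSystem 𝒞)
    (huniv : Tendsto (fun k => (ρ k).real univ) l (𝓝 (ν.real univ)))
    (h𝒞 : ∀ s ∈ 𝒞, Tendsto (fun k => (ρ k).real s) l (𝓝 (ν.real s)))
    {s : Set α} (hs : MeasurableSet s) :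
    Tendsto (fun k => (ρ k).real s) l (𝓝 (ν.real s)) := by
  have hfin (k : ι) : IsFiniteMeasure (ρ k) := isFiniteMeasure_of_le P (hle k)
  induction s, hs using MeasurableSpace.induction_on_inter hgen hpi with
  | empty => simpa only [measureReal_empty] using tendsto_const_nhds
  | basic s hs => exact h𝒞 s hs
  | compl s hs ih =>
    simp only [measureReal_compl hs]
    exact huniv.sub ih
  | iUnion f hdisj hmeas ih =>
    simp only [← (hasSum_measureReal_iUnion _ hdisj hmeas).tsum_eq]
    refine tendsto_tsum_of_dominated_convergence
      (hasSum_measureReal_iUnion P hdisj hmeas).summable ih (.of_forall fun k i => ?_)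
    rw [Real.norm_of_nonneg measureReal_nonneg]
    exact ENNReal.toReal_mono (measure_ne_top _ _) (hle k _)

/-- A measure-preserving map `T` is strongly mixing if `P (C ∩ T⁻ᵏ D) → P C * P D` for all
measurable sets `C` and `D`. -/
structure StronglyMixing (T : α → α) (P : Measure α) : Prop extends MeasurePreserving T P P where
  tendsto_measureReal_inter : ∀ ⦃C D : Set α⦄, MeasurableSet C → MeasurableSet D →
    Tendsto (fun k => P.real (C ∩ T^[k] ⁻¹' D)) atTop (𝓝 (P.real C * P.real D))

namespace StronglyMixing

lemma of_isPiSystem {T : α → α} {P : Measure α} [IsProbabilityMeasure P]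
    (hT : MeasurePreserving T P P) {𝒞 : Set (Set α)}
    (hgen : mα = MeasurableSpace.generateFrom 𝒞) (hpi : IsPiSystem 𝒞)
    (h𝒞 : ∀ C ∈ 𝒞, ∀ D ∈ 𝒞,
      Tendsto (fun k => P.real (C ∩ T^[k] ⁻¹' D)) atTop (𝓝 (P.real C * P.real D))) :
    StronglyMixing T P := by
  have hpre (k : ℕ) {D : Set α} (hD : MeasurableSet D) :
      MeasurableSet (T^[k] ⁻¹' D) ∧ P.real (T^[k] ⁻¹' D) = P.real D :=
    ⟨(hT.iterate k).measurable hD, (hT.iterate k).measureReal_preimage hD.nullMeasurableSet⟩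
  have hsmul (C D : Set α) : ((P C).toNNReal • P).real D = P.real C * P.real D :=
    measureReal_nnreal_smul_apply _
  have hleft {C D : Set α} (hC : MeasurableSet C) (hD : D ∈ 𝒞) :
      Tendsto (fun k => P.real (C ∩ T^[k] ⁻¹' D)) atTop (𝓝 (P.real C * P.real D)) := by
    have hDm : MeasurableSet D := hgen ▸ .basic D hD
    have hlim := tendsto_measureReal_of_isPiSystem (l := atTop) (P := P)
      (ρ := fun k => P.restrict (T^[k] ⁻¹' D)) (ν := (P D).toNNReal • P)
      (fun k => Measure.restrict_le_self) hgen hpi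
    simp only [hsmul, measureReal_restrict_apply' (hpre _ hDm).1, univ_inter, (hpre _ hDm).2,
      probReal_univ, one_mul, mul_comm (P.real D)] at hlim
    exact hlim tendsto_const_nhds (fun C hC => h𝒞 C hC D hD) hC
  refine ⟨hT, fun C D hC hD => ?_⟩
  have hmap (k : ℕ) {D : Set α} (hD : MeasurableSet D) :
      ((P.restrict C).map T^[k]).real D = P.real (C ∩ T^[k] ⁻¹' D) := by
    rw [map_measureReal_apply (hT.iterate k).measurable hD,
      measureReal_restrict_apply (hpre k hD).1, inter_comm]
  have hlim := tendsto_measureReal_of_isPiSystem (l := atTop) (P := P)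
    (ρ := fun k => (P.restrict C).map T^[k]) (ν := (P C).toNNReal • P)
    (fun k => (Measure.map_mono Measure.restrict_le_self (hT.iterate k).measurable).trans_eq
      (hT.iterate k).map_eq) hgen hpi (by simp [hmap, hsmul]) (s := D)
  simp only [hsmul, hmap _ hD] at hlim
  refine hlim (fun D hD => ?_) hD
  simpa only [hmap _ (hgen ▸ .basic D hD : MeasurableSet D)] using hleft hC hD

lemma prod {T : α → α} {P : Measure α} {U : β → β} {Q : Measure β} [IsProbabilityMeasure P]
    [IsProbabilityMeasure Q] (hT : StronglyMixing T P) (hU : StronglyMixing U Q) :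
    StronglyMixing (Prod.map T U) (P.prod Q) := by
  refine of_isPiSystem (hT.toMeasurePreserving.prod hU.toMeasurePreserving)
    generateFrom_prod.symm isPiSystem_prod ?_
  rintro _ ⟨C, hC, C', hC', rfl⟩ _ ⟨D, hD, D', hD', rfl⟩
  simp only [Prod.map_iterate, preimage_prod_map_prod, prod_inter_prod, measureReal_prod_prod]
  rw [mul_mul_mul_comm]
  exact (hT.tendsto_measureReal_inter hC hD).mul (hU.tendsto_measureReal_inter hC' hD')

lemma ergodic {T : α → α} {P : Measure α} [IsProbabilityMeasure P] (hT : StronglyMixing T P) :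
    Ergodic T P := by
  refine ⟨hT.toMeasurePreserving, ⟨fun B hB hinv => ?_⟩⟩
  have hinv_iterate (k : ℕ) : T^[k] ⁻¹' B = B := by
    rw [Set.preimage_iterate_eq, Function.iterate_fixed hinv]
  have hidem : IsIdempotentElem (P.real B) := by
    have := hT.tendsto_measureReal_inter hB hB
    simp only [hinv_iterate, inter_self, tendsto_const_nhds_iff] at this
    exact this.symm
  rw [eventuallyConst_set']
  rcases IsIdempotentElem.iff_eq_zero_or_one.1 hidem with h | h
  · exact .inl (ae_eq_empty.2 ((measureReal_eq_zero_iff).1 h))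
  · exact .inr (ae_eq_univ_iff_measure_eq hB.nullMeasurableSet |>.2
      (by rw [measure_univ, ← ENNReal.toReal_eq_one_iff]; exact h))

end StronglyMixing

end StronglyMixing

section BernoulliShift

variable {ι α : Type*}

lemma iterate_comp_right (σ : ι → ι) (k : ℕ) :
    (fun e : ι → α => e ∘ σ)^[k] = fun e => e ∘ σ^[k] := by
  induction k with
  | zero => rfl
  | succ k ih => rw [Function.iterate_succ', Function.iterate_succ, ih]; rfl

variable [MeasurableSpace α] (ν : Measure α) [IsProbabilityMeasure ν]

lemma measurePreserving_comp_infinitePi {σ : ι → ι} (hσ : σ.Injective) :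
    MeasurePreserving (fun e : ι → α => e ∘ σ) (Measure.infinitePi fun _ => ν)
      (Measure.infinitePi fun _ => ν) :=
  ⟨by fun_prop, Measure.map_infinitePi_infinitePi_of_inj hσ⟩

lemma indepFun_restrict_restrict_comp_infinitePi {S S' : Finset ι} {σ : ι → ι}
    (hdisj : ∀ i ∈ S', σ i ∉ S) :
    IndepFun S.restrict (fun e : ι → α => S'.restrict (e ∘ σ)) (Measure.infinitePi fun _ => ν) := by
  classical
  have hindep : iIndepFun (fun i (e : ι → α) => e i) (Measure.infinitePi fun _ => ν) :=
    iIndepFun_infinitePi (X := fun _ => id) fun _ => measurable_id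
  have hS : Disjoint S (S'.image σ) := by
    simpa only [Finset.disjoint_right, Finset.forall_mem_image] using hdisj
  have hrelabel : Measurable fun (f : S'.image σ → α) (j : S') =>
      f ⟨σ j, Finset.mem_image_of_mem σ j.2⟩ := by fun_prop
  exact (hindep.indepFun_finset S _ hS fun i => measurable_pi_apply i).comp measurable_id hrelabel

lemma stronglyMixing_comp_infinitePi {σ : ι → ι} (hσ : σ.Injective)
    (hescape : ∀ i j, ∀ᶠ k in atTop, σ^[k] i ≠ j) :
    StronglyMixing (fun e : ι → α => e ∘ σ) (Measure.infinitePi fun _ => ν) := by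
  have hpres := measurePreserving_comp_infinitePi ν hσ
  refine .of_isPiSystem hpres generateFrom_measurableCylinders.symm
    isPiSystem_measurableCylinders fun C hC D hD => ?_
  obtain ⟨S, A, hA, rfl⟩ := (mem_measurableCylinders C).1 hC
  obtain ⟨S', A', hA', rfl⟩ := (mem_measurableCylinders D).1 hD
  have hdisj : ∀ᶠ k in atTop, ∀ i ∈ S', σ^[k] i ∉ S := by
    simp_rw [S'.eventually_all, ← Finset.forall_mem_not_eq, S.eventually_all]
    exact fun i _ j _ => hescape i j
  have hD : MeasurableSet (cylinder (α := fun _ => α) S' A') := .cylinder _ hA'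
  refine tendsto_const_nhds.congr' (hdisj.mono fun k hk => ?_)
  rw [← (hpres.iterate k).measureReal_preimage hD.nullMeasurableSet]
  simp only [iterate_comp_right]
  simp only [measureReal_def, ← ENNReal.toReal_mul]
  exact congrArg _ ((indepFun_restrict_restrict_comp_infinitePi ν hk).measure_inter_preimage_eq_mul
    A A' hA hA').symm

lemma stronglyMixing_comp_add_one_infinitePi :
    StronglyMixing (fun e : ℤ → α => e ∘ (· + 1)) (Measure.infinitePi fun _ => ν) := by
  refine stronglyMixing_comp_infinitePi ν (add_left_injective 1) fun i j => ?_
  filter_upwards [eventually_gt_atTop (j - i).toNat] with k hk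
  rw [add_right_iterate_apply, nsmul_eq_mul, mul_one]
  lia

lemma ae_forall_infinitePi [Countable ι] {p : α → Prop} (hp : ∀ᵐ x ∂ν, p x) :
    ∀ᵐ e ∂Measure.infinitePi fun _ : ι => ν, ∀ i, p (e i) :=
  ae_all_iff.2 fun i =>
    (measurePreserving_eval_infinitePi (fun _ => ν) i).quasiMeasurePreserving.ae hp

lemma map_eq_infinitePi_of_iid {Ω : Type*} [MeasurableSpace Ω] {μ : Measure Ω}
    [IsProbabilityMeasure μ] {Y : ι → Ω → α} (hY : ∀ i, Measurable (Y i)) (hindep : iIndepFun Y μ)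
    (i₀ : ι) (hident : ∀ i, IdentDistrib (Y i) (Y i₀) μ μ) :
    μ.map (fun ω i => Y i ω) = Measure.infinitePi fun _ => μ.map (Y i₀) := by
  rw [hindep.map_fun_eq_infinitePi_map hY]
  simp only [(hident _).map_eq]

end BernoulliShift

section MarkovLaw

lemma isPiSystem_natCylinders {E : ℕ → Type*} :
    IsPiSystem {s : Set (∀ i, E i) | ∃ x n, s = PiNat.cylinder x n} := by
  rintro _ ⟨x, n, rfl⟩ _ ⟨y, m, rfl⟩ ⟨z, hzx, hzy⟩
  rw [← PiNat.mem_cylinder_iff_eq.1 hzx, ← PiNat.mem_cylinder_iff_eq.1 hzy]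
  rcases le_total n m with h | h
  · exact ⟨z, m, inter_eq_right.2 (PiNat.cylinder_anti z h)⟩
  · exact ⟨z, n, inter_eq_left.2 (PiNat.cylinder_anti z h)⟩

lemma natCylinder_inter_shift {α : Type*} {x y z : ℕ → α} {n : ℕ} (hzx : ∀ i ≤ n, z i = x i)
    (hzy : ∀ i, z (i + n) = y i) (m : ℕ) :
    PiNat.cylinder x (n + 1) ∩ {u | (fun i => u (i + n)) ∈ PiNat.cylinder y (m + 1)} =
      PiNat.cylinder z (n + m + 1) := by
  ext u
  simp only [PiNat.cylinder, mem_inter_iff, mem_ofPred_eq]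
  refine ⟨fun ⟨hux, huy⟩ i hi => ?_, fun hu => ⟨fun i hi => ?_, fun i hi => ?_⟩⟩
  · rcases le_total i n with hin | hni
    · rw [hux i (by lia), hzx i hin]
    · obtain ⟨k, rfl⟩ := Nat.exists_eq_add_of_le' hni
      rw [huy k (by lia), hzy]
  · rw [hu i (by lia), hzx i (by lia)]
  · rw [hu (i + n) (by lia), hzy]

variable {α : Type*} [Countable α] [MeasurableSpace α] [MeasurableSingletonClass α]

lemma generateFrom_natCylinders :
    MeasurableSpace.generateFrom {s : Set (ℕ → α) | ∃ x n, s = PiNat.cylinder x n} =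
      MeasurableSpace.pi := by
  let _ : TopologicalSpace α := ⊥
  have : DiscreteTopology α := ⟨rfl⟩
  rw [← (PiNat.isTopologicalBasis_cylinders fun _ : ℕ => α).borel_eq_generateFrom]
  exact (BorelSpace.measurable_eq (α := ℕ → α)).symm

lemma measurableSet_natCylinder (x : ℕ → α) (n : ℕ) : MeasurableSet (PiNat.cylinder x n) := by
  rw [← generateFrom_natCylinders]
  exact .basic _ ⟨x, n, rfl⟩

lemma measure_ext_of_natCylinders {ρ ρ' : Measure (ℕ → α)} [IsFiniteMeasure ρ]
    (h : ∀ x n, ρ (PiNat.cylinder x n) = ρ' (PiNat.cylinder x n)) : ρ = ρ' := by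
  rcases isEmpty_or_nonempty (ℕ → α) with _ | ⟨⟨x⟩⟩
  · exact Subsingleton.elim _ _
  · exact ext_of_generate_finite _ generateFrom_natCylinders.symm isPiSystem_natCylinders
      (by rintro _ ⟨x, n, rfl⟩; exact h x n) (by simpa using h x 0)

/-- `w a` is the law of the Markov chain with transition probabilities `p` started at `a`, encoded
through the probabilities of its finite paths. -/
def IsMarkovLaw (p : α → α → ℝ≥0∞) (w : α → Measure (ℕ → α)) : Prop :=
  ∀ x n, w (x 0) (PiNat.cylinder x (n + 1)) = ∏ i ∈ Finset.range n, p (x i) (x (i + 1))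

/-- The bounded harmonic functions of the transition probabilities `p` are constant. -/
def HasLiouvilleProperty (p : α → α → ℝ≥0∞) : Prop :=
  ∀ h : α → ℝ≥0∞, (∀ a, h a ≤ 1) → (∀ a, h a = ∑' b, p a b * h b) → ∀ a b, h a = h b

/-- An event on sequences whose occurrence is not affected by dropping the first term. -/
def IsShiftInvariant {β : Type*} (D : Set (ℕ → β)) : Prop :=
  ∀ y, (fun i => y (i + 1)) ∈ D ↔ y ∈ D

lemma IsShiftInvariant.mem_add_iff {β : Type*} {D : Set (ℕ → β)} (hD : IsShiftInvariant D)
    (y : ℕ → β) (n : ℕ) : (fun i => y (i + n)) ∈ D ↔ y ∈ D := by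
  induction n with
  | zero => rfl
  | succ n ih =>
    rw [← ih, ← hD fun i => y (i + n)]
    simp only [add_assoc, add_comm 1]

namespace IsMarkovLaw

variable {p : α → α → ℝ≥0∞} {w : α → Measure (ℕ → α)} [∀ a, IsProbabilityMeasure (w a)]

lemma ae_zero_eq (hw : IsMarkovLaw p w) (a : α) : ∀ᵐ y ∂w a, y 0 = a := by
  have h : ∀ᵐ y ∂w a, y ∈ PiNat.cylinder (fun _ => a) 1 :=
    (mem_ae_iff_prob_eq_one (measurableSet_natCylinder _ _)).2 (hw (fun _ => a) 0)
  filter_upwards [h] with y hy using hy 0 one_pos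

lemma measure_cylinder_of_ne (hw : IsMarkovLaw p w) {a : α} {x : ℕ → α} (hx : x 0 ≠ a) (n : ℕ) :
    w a (PiNat.cylinder x (n + 1)) = 0 :=
  measure_mono_null (fun _ hy hy0 => hx ((hy 0 n.succ_pos).symm.trans hy0)) (hw.ae_zero_eq a)

lemma measure_cylinder_inter_shift_cylinder (hw : IsMarkovLaw p w) (x y : ℕ → α) (n m : ℕ) :
    w (x 0) (PiNat.cylinder x (n + 1) ∩ {z | (fun i => z (i + n)) ∈ PiNat.cylinder y (m + 1)}) =
      w (x 0) (PiNat.cylinder x (n + 1)) * w (x n) (PiNat.cylinder y (m + 1)) := by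
  by_cases hyx : y 0 = x n
  · let z : ℕ → α := fun i => if i ≤ n then x i else y (i - n)
    have hzx (i : ℕ) (hi : i ≤ n) : z i = x i := if_pos hi
    have hzy (i : ℕ) : z (i + n) = y i := by
      rcases i.eq_zero_or_pos with rfl | hi
      · rw [zero_add, hzx n le_rfl, hyx]
      · simp [z, hi.ne']
    rw [natCylinder_inter_shift hzx hzy, ← hyx, hw y m, ← hzx 0 n.zero_le, hw z, hzx 0 n.zero_le,
      hw x, Finset.prod_range_add]
    refine congrArg₂ _ (Finset.prod_congr rfl fun i hi => ?_) (Finset.prod_congr rfl fun i _ => ?_)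
    · have := Finset.mem_range.1 hi
      rw [hzx i (by lia), hzx (i + 1) (by lia)]
    · rw [add_comm n i, hzy, add_right_comm, hzy]
  · have hempty : PiNat.cylinder x (n + 1) ∩
        {z | (fun i => z (i + n)) ∈ PiNat.cylinder y (m + 1)} = ∅ :=
      eq_empty_of_forall_notMem fun z ⟨hzx, hzy⟩ =>
        hyx ((hzy 0 m.succ_pos).symm.trans ((congrArg z n.zero_add).trans (hzx n n.lt_succ_self)))
    rw [hempty, measure_empty, hw.measure_cylinder_of_ne hyx, mul_zero]

lemma measure_cylinder_inter_shift (hw : IsMarkovLaw p w) (x : ℕ → α) (n : ℕ) {D : Set (ℕ → α)}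
    (hD : MeasurableSet D) :
    w (x 0) (PiNat.cylinder x (n + 1) ∩ {y | (fun i => y (i + n)) ∈ D}) =
      w (x 0) (PiNat.cylinder x (n + 1)) * w (x n) D := by
  have hshift : Measurable fun (y : ℕ → α) i => y (i + n) := by fun_prop
  have hmap {D : Set (ℕ → α)} (hD : MeasurableSet D) :
      ((w (x 0)).restrict (PiNat.cylinder x (n + 1))).map (fun y i => y (i + n)) D =
        w (x 0) (PiNat.cylinder x (n + 1) ∩ {y | (fun i => y (i + n)) ∈ D}) := by
    rw [Measure.map_apply hshift hD, Measure.restrict_apply (hshift hD), inter_comm]; rfl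
  suffices ((w (x 0)).restrict (PiNat.cylinder x (n + 1))).map (fun y i => y (i + n)) =
      w (x 0) (PiNat.cylinder x (n + 1)) • w (x n) by
    rw [← hmap hD, this]; rfl
  refine measure_ext_of_natCylinders fun y m => ?_
  rw [hmap (measurableSet_natCylinder _ _), Measure.smul_apply, smul_eq_mul]
  rcases m with _ | m
  · simp
  · exact hw.measure_cylinder_inter_shift_cylinder x y n m

lemma measure_eq_tsum (hw : IsMarkovLaw p w) {D : Set (ℕ → α)} (hD : MeasurableSet D)
    (hinv : IsShiftInvariant D) (a : α) : w a D = ∑' b, p a b * w b D := by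
  have hstep (b : α) : w a (D ∩ (· 1) ⁻¹' {b}) = p a b * w b D := by
    let x : ℕ → α := fun i => if i = 0 then a else b
    have hcyl : (D ∩ (· 1) ⁻¹' {b} : Set (ℕ → α)) =ᵐ[w a]
        (PiNat.cylinder x 2 ∩ {y | (fun i => y (i + 1)) ∈ D} : Set (ℕ → α)) := by
      refine eventuallyEq_set.2 ?_
      filter_upwards [hw.ae_zero_eq a] with y hy
      refine ⟨fun ⟨hyD, hyb⟩ => ⟨fun i hi => ?_, (hinv y).2 hyD⟩,
        fun ⟨hyx, hyD⟩ => ⟨(hinv y).1 hyD, hyx 1 one_lt_two⟩⟩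
      interval_cases i
      exacts [hy, hyb]
    calc w a (D ∩ (· 1) ⁻¹' {b})
      _ = w (x 0) (PiNat.cylinder x 2) * w b D :=
        (measure_congr hcyl).trans (hw.measure_cylinder_inter_shift x 1 hD)
      _ = p a b * w b D := by rw [hw x 1, Finset.prod_range_one]; rfl
  have hunion : D = ⋃ b, D ∩ (· 1) ⁻¹' {b} := by
    rw [← inter_iUnion, iUnion_eq_univ_iff.2 fun y => ⟨y 1, rfl⟩, inter_univ]
  have hdisj : Pairwise (Function.onFun Disjoint fun b => D ∩ (· 1) ⁻¹' {b}) :=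
    fun b c hbc => disjoint_left.2 fun y hb hc => hbc (hb.2.symm.trans hc.2)
  calc w a D = w a (⋃ b, D ∩ (· 1) ⁻¹' {b}) := by rw [← hunion]
    _ = ∑' b, w a (D ∩ (· 1) ⁻¹' {b}) :=
      measure_iUnion hdisj fun b => hD.inter (measurable_pi_apply 1 (measurableSet_singleton b))
    _ = ∑' b, p a b * w b D := tsum_congr hstep

lemma measure_eq_of_liouville (hw : IsMarkovLaw p w) (hp : HasLiouvilleProperty p) {D : Set (ℕ → α)}
    (hD : MeasurableSet D) (hinv : IsShiftInvariant D) (a b : α) : w a D = w b D :=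
  hp (fun a => w a D) (fun _ => prob_le_one) (fun a => hw.measure_eq_tsum hD hinv a) a b

lemma measure_eq_zero_or_one (hw : IsMarkovLaw p w) (hp : HasLiouvilleProperty p) {D : Set (ℕ → α)}
    (hD : MeasurableSet D) (hinv : IsShiftInvariant D) (a : α) : w a D = 0 ∨ w a D = 1 := by
  suffices (w a).restrict D = w a D • w a by
    refine measure_eq_zero_or_one_of_indepSet_self <|
      (indepSet_iff_measure_inter_eq_mul hD hD _).2 ?_
    calc w a (D ∩ D) = (w a).restrict D D := (Measure.restrict_apply hD).symm
      _ = w a D * w a D := by rw [this]; rfl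
  refine measure_ext_of_natCylinders fun x n => ?_
  rw [Measure.restrict_apply (measurableSet_natCylinder x n), Measure.smul_apply, smul_eq_mul]
  rcases n with _ | n
  · simp
  by_cases hx : x 0 = a
  · subst hx
    have hshift : {y | (fun i => y (i + n)) ∈ D} = D := ext fun y => hinv.mem_add_iff y n
    rw [mul_comm, hw.measure_eq_of_liouville hp hD hinv (x 0) (x n),
      ← hw.measure_cylinder_inter_shift x n hD, hshift]
  · rw [hw.measure_cylinder_of_ne hx, mul_zero]
    exact measure_mono_null inter_subset_left (hw.measure_cylinder_of_ne hx n)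

end IsMarkovLaw

end MarkovLaw

section Harmonic

/-- The product of the odds `(1 - e k) / e k` of a step to the left over `1 ≤ k ≤ n`, that is, the
exponential of the potential of the environment `e` at `n`. -/
noncomputable def oddsProd (e : ℤ → ℝ) (n : ℕ) : ℝ :=
  ∏ k ∈ Finset.range n, (1 - e (k + 1)) / e (k + 1)

lemma oddsProd_pos {e : ℤ → ℝ} (he : ∀ i, e i ∈ Ioo 0 1) (n : ℕ) : 0 < oddsProd e n :=
  Finset.prod_pos fun _ _ => div_pos (sub_pos.2 (he _).2) (he _).1

lemma oddsProd_succ (e : ℤ → ℝ) (n : ℕ) :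
    oddsProd e (n + 1) = oddsProd e n * ((1 - e (n + 1)) / e (n + 1)) :=
  Finset.prod_range_succ _ _

lemma oddsProd_succ_eq_mul (e : ℤ → ℝ) (n : ℕ) :
    oddsProd e (n + 1) = oddsProd (e ∘ (· + 1)) n * ((1 - e 1) / e 1) := by
  simp only [oddsProd, Function.comp_apply, Finset.prod_range_succ', Nat.cast_add, Nat.cast_one,
    Nat.cast_zero, zero_add]

lemma tendsto_zero_of_sub_eq_const_mul {f u : ℕ → ℝ} {c B : ℝ} (hc : c ≠ 0) (hu : ∀ n, 0 ≤ u n)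
    (hf : ∀ n, |f n| ≤ B) (hfu : ∀ n, f (n + 1) - f n = c * u n) : Tendsto u atTop (𝓝 0) := by
  refine (summable_of_sum_range_le (c := |c|⁻¹ * (B + B)) hu fun n => ?_).tendsto_atTop_zero
  have hsum : ∑ i ∈ Finset.range n, u i = c⁻¹ * (f n - f 0) := by
    rw [← Finset.sum_range_sub, Finset.sum_congr rfl fun i _ => hfu i, ← Finset.mul_sum,
      inv_mul_cancel_left₀ hc]
  calc ∑ i ∈ Finset.range n, u i ≤ |∑ i ∈ Finset.range n, u i| := le_abs_self _
    _ = |c|⁻¹ * |f n - f 0| := by rw [hsum, abs_mul, abs_inv]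
    _ ≤ |c|⁻¹ * (B + B) := by gcongr; exact (abs_sub _ _).trans (add_le_add (hf n) (hf 0))

variable {e g : ℤ → ℝ} (he : ∀ i, e i ∈ Ioo 0 1)
  (hg : ∀ i, g i = e i * g (i + 1) + (1 - e i) * g (i - 1))

include he hg in
lemma harmonic_increment_nat (n : ℕ) : g (n + 1) - g n = (g 1 - g 0) * oddsProd e n := by
  induction n with
  | zero => simp [oddsProd]
  | succ n ih =>
    have hpos := (he (n + 1)).1.ne'
    have hharm := hg (n + 1)
    rw [add_sub_cancel_right] at hharm
    rw [oddsProd_succ, ← mul_assoc, ← ih]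
    push_cast
    field_simp
    linear_combination - hharm

include he hg in
lemma harmonic_increment_neg (n : ℕ) :
    g (1 - n) - g (-n) = (g 1 - g 0) * (oddsProd (fun i => e (1 - i)) n)⁻¹ := by
  induction n with
  | zero => simp [oddsProd]
  | succ n ih =>
    have hne := (sub_pos.2 (he (-n)).2).ne'
    have hharm := hg (-n)
    rw [neg_add_eq_sub] at hharm
    rw [oddsProd_succ, mul_inv, ← mul_assoc, ← ih, sub_add_cancel_right]
    push_cast
    rw [sub_add_cancel_right, neg_add']
    field_simp
    linear_combination hharm

include he hg in
lemma harmonic_eq_of_bounded {B : ℝ} (hB : ∀ i, |g i| ≤ B)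
    (hosc : ¬ (Tendsto (oddsProd e) atTop (𝓝 0) ∧
      Tendsto (oddsProd fun i => e (1 - i)) atTop atTop)) (i j : ℤ) : g i = g j := by
  have hflat : g 1 - g 0 = 0 := by
    by_contra hne
    have hpos := oddsProd_pos he
    have hpos' := oddsProd_pos fun i => he (1 - i)
    refine hosc ⟨?_, ?_⟩
    · exact tendsto_zero_of_sub_eq_const_mul (f := fun n => g n) hne (fun n => (hpos n).le)
        (fun n => hB n) fun n => mod_cast harmonic_increment_nat he hg n
    · have hinv : Tendsto (oddsProd fun i => e (1 - i))⁻¹ atTop (𝓝 0) :=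
        tendsto_zero_of_sub_eq_const_mul (f := fun n => -g (1 - n)) hne
          (fun n => (inv_pos.2 (hpos' n)).le) (fun n => (abs_neg _).trans_le (hB _)) fun n => by
            have hincr := harmonic_increment_neg he hg n
            push_cast
            rw [sub_add_eq_sub_sub_swap, sub_self, zero_sub, Pi.inv_apply]
            linear_combination hincr
      simpa using (tendsto_nhdsWithin_iff.2
        ⟨hinv, .of_forall fun n => inv_pos.2 (hpos' n)⟩).inv_tendsto_nhdsGT_zero
  have hperiod : Function.Periodic g 1 := by
    intro i
    rw [← sub_eq_zero]
    obtain ⟨n, rfl | rfl⟩ := i.eq_nat_or_neg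
    · rw [harmonic_increment_nat he hg, hflat, zero_mul]
    · rw [neg_add_eq_sub, harmonic_increment_neg he hg, hflat, zero_mul]
  have hconst (i : ℤ) : g i = g 0 := by simpa using hperiod.int_mul_eq i
  rw [hconst i, hconst j]

/-- The transition probabilities on `ℤ` of the walk in the environment `e`. -/
noncomputable def transitionProb (e : ℤ → ℝ) (x y : ℤ) : ℝ≥0∞ :=
  ENNReal.ofReal (stepProb (e x) (y - x))

lemma tsum_transitionProb_mul (e : ℤ → ℝ) (h : ℤ → ℝ≥0∞) (x : ℤ) :
    ∑' y, transitionProb e x y * h y =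
      ENNReal.ofReal (e x) * h (x + 1) + ENNReal.ofReal (1 - e x) * h (x - 1) := by
  rw [tsum_eq_sum (s := {x + 1, x - 1}), Finset.sum_pair (by lia)]
  · simp [transitionProb, stepProb]
  · intro y hy
    have hy : y - x ≠ 1 ∧ y - x ≠ -1 := by
      simp only [Finset.mem_insert, Finset.mem_singleton] at hy
      lia
    simp [transitionProb, stepProb, hy]

lemma hasLiouvilleProperty_transitionProb {e : ℤ → ℝ} (he : ∀ i, e i ∈ Ioo 0 1)
    (hosc : ¬ (Tendsto (oddsProd e) atTop (𝓝 0) ∧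
      Tendsto (oddsProd fun i => e (1 - i)) atTop atTop)) :
    HasLiouvilleProperty (transitionProb e) := by
  intro h hle hharm
  have hfin (i : ℤ) : h i ≠ ∞ := ne_top_of_le_ne_top ENNReal.one_ne_top (hle i)
  have hbound (i : ℤ) : |(h i).toReal| ≤ 1 := by
    rw [abs_of_nonneg ENNReal.toReal_nonneg]
    exact ENNReal.toReal_mono ENNReal.one_ne_top (hle i)
  have hreal (i : ℤ) : (h i).toReal =
      e i * (h (i + 1)).toReal + (1 - e i) * (h (i - 1)).toReal := by
    conv_lhs => rw [hharm i, tsum_transitionProb_mul]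
    rw [ENNReal.toReal_add (ENNReal.mul_ne_top ENNReal.ofReal_ne_top (hfin _))
      (ENNReal.mul_ne_top ENNReal.ofReal_ne_top (hfin _)), ENNReal.toReal_mul, ENNReal.toReal_mul,
      ENNReal.toReal_ofReal (he i).1.le, ENNReal.toReal_ofReal (sub_nonneg.2 (he i).2.le)]
  exact fun i j => (ENNReal.toReal_eq_toReal_iff' (hfin i) (hfin j)).1
    (harmonic_eq_of_bounded (g := fun i => (h i).toReal) he hreal hbound hosc i j)

end Harmonic

section RandomEnvironment

lemma measurable_oddsProd (n : ℕ) : Measurable fun e => oddsProd e n :=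
  Finset.measurable_prod _ fun _ _ => by fun_prop

lemma tendsto_oddsProd_comp_add_one_iff {e : ℤ → ℝ} (he : ∀ i, e i ∈ Ioo 0 1) :
    Tendsto (oddsProd (e ∘ (· + 1))) atTop (𝓝 0) ↔ Tendsto (oddsProd e) atTop (𝓝 0) := by
  have hodds : (1 - e 1) / e 1 ≠ 0 := (div_pos (sub_pos.2 (he 1).2) (he 1).1).ne'
  rw [← tendsto_add_atTop_iff_nat (f := oddsProd e) 1]
  simp only [oddsProd_succ_eq_mul]
  refine ⟨fun h => by simpa using h.mul_const ((1 - e 1) / e 1), fun h => ?_⟩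
  simpa only [zero_mul, mul_inv_cancel_right₀ hodds] using h.mul_const ((1 - e 1) / e 1)⁻¹

lemma ae_not_tendsto_oddsProd {ν : Measure ℝ} [IsProbabilityMeasure ν]
    (hν : ∀ᵐ p ∂ν, p ∈ Ioo 0 1) :
    ∀ᵐ e ∂Measure.infinitePi fun _ : ℤ => ν, ¬ (Tendsto (oddsProd e) atTop (𝓝 0) ∧
      Tendsto (oddsProd fun i => e (1 - i)) atTop atTop) := by
  have hmeas : MeasurableSet {e | Tendsto (oddsProd e) atTop (𝓝 0)} :=
    measurableSet_tendsto _ measurable_oddsProd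
  have hinv : (fun e : ℤ → ℝ => e ∘ (· + 1)) ⁻¹' {e | Tendsto (oddsProd e) atTop (𝓝 0)}
      =ᵐ[Measure.infinitePi fun _ => ν] {e | Tendsto (oddsProd e) atTop (𝓝 0)} := by
    refine eventuallyEq_set.2 ?_
    filter_upwards [ae_forall_infinitePi ν hν] with e he using tendsto_oddsProd_comp_add_one_iff he
  rcases (stronglyMixing_comp_add_one_infinitePi ν).ergodic.quasiErgodic.ae_mem_or_ae_notMem₀
    hmeas.nullMeasurableSet hinv with hall | hnone
  · have hrefl := measurePreserving_comp_infinitePi ν (sub_right_injective (b := (1 : ℤ)))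
    filter_upwards [hrefl.quasiMeasurePreserving.ae hall] with e he ⟨_, hatTop⟩
    exact not_tendsto_nhds_of_tendsto_atTop hatTop 0 he
  · filter_upwards [hnone] with e he using fun h => he h.1

lemma ae_hasLiouvilleProperty_transitionProb {ν : Measure ℝ} [IsProbabilityMeasure ν]
    (hν : ∀ᵐ p ∂ν, p ∈ Ioo 0 1) :
    ∀ᵐ e ∂Measure.infinitePi fun _ : ℤ => ν, HasLiouvilleProperty (transitionProb e) := by
  filter_upwards [ae_forall_infinitePi ν hν, ae_not_tendsto_oddsProd hν] with e he hosc
  exact hasLiouvilleProperty_transitionProb he hosc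

end RandomEnvironment

section QuenchedLaw

/-- `m` is the law of the walk started at the origin in the environment `e`. -/
def IsQuenchedLaw (e : ℤ → ℝ) (m : Measure (ℕ → ℤ)) : Prop :=
  ∀ x n, x 0 = 0 →
    m (PiNat.cylinder x (n + 1)) = ∏ i ∈ Finset.range n, transitionProb e (x i) (x (i + 1))

/-- The law of the walk started at `y` in the environment `e`, when `κ e` is the law of the walk
started at the origin. -/
noncomputable def quenchedLaw (κ : Kernel (ℤ → ℝ) (ℕ → ℤ)) (e : ℤ → ℝ) (y : ℤ) :
    Measure (ℕ → ℤ) :=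
  (κ (e ∘ (· + y))).map fun q i => q i + y

lemma transitionProb_comp_add (e : ℤ → ℝ) (x y z : ℤ) :
    transitionProb (e ∘ (· + z)) (x - z) (y - z) = transitionProb e x y := by
  simp [transitionProb]

lemma measurable_transitionProb (x y : ℤ) : Measurable fun e => transitionProb e x y := by
  unfold transitionProb stepProb
  split_ifs <;> fun_prop

variable {κ : Kernel (ℤ → ℝ) (ℕ → ℤ)} {e : ℤ → ℝ}

instance [IsMarkovKernel κ] (y : ℤ) : IsProbabilityMeasure (quenchedLaw κ e y) :=
  Measure.isProbabilityMeasure_map (by fun_prop : Measurable _).aemeasurable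

lemma isMarkovLaw_quenchedLaw
    (h : ∀ y : ℤ, IsQuenchedLaw (e ∘ (· + y)) (κ (e ∘ (· + y)))) :
    IsMarkovLaw (transitionProb e) (quenchedLaw κ e) := by
  intro x n
  have hpre : (fun (q : ℕ → ℤ) i => q i + x 0) ⁻¹' PiNat.cylinder x (n + 1) =
      PiNat.cylinder (fun i => x i - x 0) (n + 1) :=
    ext fun q => forall₂_congr fun i _ => eq_sub_iff_add_eq.symm
  rw [quenchedLaw, Measure.map_apply (by fun_prop) (measurableSet_natCylinder _ _), hpre,
    h _ _ _ (sub_self _)]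
  simp only [transitionProb_comp_add]

lemma quenchedLaw_zero : quenchedLaw κ e 0 = κ e := by
  simp [quenchedLaw, Function.comp_def]

lemma quenchedLaw_one_apply {D : Set (ℕ → ℤ)} (hD : MeasurableSet D) :
    quenchedLaw κ e 1 D = κ (e ∘ (· + 1)) {q | (fun i => q i + 1) ∈ D} :=
  Measure.map_apply (by fun_prop) hD

lemma stepProb_nonneg {p : ℝ} (hp : p ∈ Ioo 0 1) (s : ℤ) : 0 ≤ stepProb p s := by
  unfold stepProb
  split_ifs
  exacts [hp.1.le, sub_nonneg.2 hp.2.le, le_rfl]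

lemma ae_isQuenchedLaw_condDistrib {Ω : Type*} [MeasurableSpace Ω] {μ : Measure Ω}
    [IsFiniteMeasure μ] {E : Ω → ℤ → ℝ} {W : Ω → ℕ → ℤ} (hE : Measurable E) (hW : Measurable W)
    (hmem : ∀ᵐ e ∂μ.map E, ∀ i, e i ∈ Ioo 0 1)
    (hquenched : ∀ n x, x 0 = 0 →
      μ⟦W ⁻¹' PiNat.cylinder x (n + 1) | MeasurableSpace.comap E MeasurableSpace.pi⟧ =ᵐ[μ]
        fun ω => ∏ i ∈ Finset.range n, stepProb (E ω (x i)) (x (i + 1) - x i)) :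
    ∀ᵐ e ∂μ.map E, IsQuenchedLaw e (condDistrib W E μ e) := by
  have hcyl (x : ℕ → ℤ) (n : ℕ) (hx : x 0 = 0) : ∀ᵐ e ∂μ.map E,
      condDistrib W E μ e (PiNat.cylinder x (n + 1)) =
        ∏ i ∈ Finset.range n, transitionProb e (x i) (x (i + 1)) := by
    have hmeas := measurableSet_natCylinder x (n + 1)
    refine (ae_map_iff hE.aemeasurable (measurableSet_eq_fun (Kernel.measurable_coe _ hmeas)
      (Finset.measurable_prod _ fun i _ => measurable_transitionProb _ _))).2 ?_
    filter_upwards [condDistrib_ae_eq_condExp hE hW hmeas, hquenched n x hx,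
      ae_of_ae_map hE.aemeasurable hmem] with ω hcond hprod hω
    rw [← ofReal_measureReal, hcond, hprod,
      ENNReal.ofReal_prod_of_nonneg fun i _ => stepProb_nonneg (hω _) _]
    rfl
  -- Countably many paths suffice, since a cylinder contains a point of any dense set.
  obtain ⟨z, hz⟩ := TopologicalSpace.exists_dense_seq (ℕ → ℤ)
  filter_upwards [ae_all_iff.2 fun k => ae_all_iff.2 fun n => ae_all_iff.2 (hcyl (z k) n)]
    with e he x n hx
  obtain ⟨k, hk⟩ := hz.exists_mem_open (PiNat.isOpen_cylinder _ x (n + 1))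
    ⟨x, PiNat.self_mem_cylinder x _⟩
  rw [← PiNat.mem_cylinder_iff_eq.1 hk, he k n ((hk 0 n.succ_pos).trans hx)]
  refine Finset.prod_congr rfl fun i hi => ?_
  have := Finset.mem_range.1 hi
  rw [hk i (by lia), hk (i + 1) (by lia)]

end QuenchedLaw

section ZeroOneLaw

variable {β : Type*} [MeasurableSpace β]

lemma measurable_comp_of_countable {α : Type*} [Countable α] [MeasurableSpace α]
    [MeasurableSingletonClass α] :
    Measurable fun q : (α → β) × (ℕ → α) => q.1 ∘ q.2 := by
  refine measurable_pi_lambda _ fun i => ?_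
  have heval : Measurable fun q : (α → β) × α => q.1 q.2 :=
    measurable_from_prod_countable_left fun a => measurable_pi_apply a
  exact heval.comp (measurable_fst.prodMk ((measurable_pi_apply i).comp measurable_snd))

variable {κ : Kernel (ℤ → ℝ) (ℕ → ℤ)} {ν : Measure ℝ} [IsProbabilityMeasure ν]
  {A : Set (ℕ → β)}

lemma ae_isMarkovLaw_quenchedLaw
    (hκ : ∀ᵐ e ∂Measure.infinitePi fun _ => ν, IsQuenchedLaw e (κ e)) :
    ∀ᵐ e ∂Measure.infinitePi fun _ => ν, IsMarkovLaw (transitionProb e) (quenchedLaw κ e) := by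
  have hshift (y : ℤ) : ∀ᵐ e ∂Measure.infinitePi fun _ => ν,
      IsQuenchedLaw (e ∘ (· + y)) (κ (e ∘ (· + y))) :=
    (measurePreserving_comp_infinitePi ν (add_left_injective y)).quasiMeasurePreserving.ae hκ
  filter_upwards [ae_all_iff.2 hshift] with e he using isMarkovLaw_quenchedLaw he

variable [IsMarkovKernel κ]

lemma ae_measure_scenery_mem (hν : ∀ᵐ p ∂ν, p ∈ Ioo 0 1)
    (hκ : ∀ᵐ e ∂Measure.infinitePi fun _ => ν, IsQuenchedLaw e (κ e)) (hA : MeasurableSet A)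
    (hinv : IsShiftInvariant A) :
    ∀ᵐ e ∂Measure.infinitePi fun _ => ν, ∀ s : ℤ → β,
      (κ e {q | s ∘ q ∈ A} = 0 ∨ κ e {q | s ∘ q ∈ A} = 1) ∧
        κ (e ∘ (· + 1)) {q | (s ∘ (· + 1)) ∘ q ∈ A} = κ e {q | s ∘ q ∈ A} := by
  filter_upwards [ae_isMarkovLaw_quenchedLaw hκ, ae_hasLiouvilleProperty_transitionProb hν]
    with e hw hp s
  have hD : MeasurableSet {q : ℕ → ℤ | s ∘ q ∈ A} :=
    measurable_comp_of_countable.comp measurable_prodMk_left hA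
  have hDinv : IsShiftInvariant {q : ℕ → ℤ | s ∘ q ∈ A} := fun q => hinv (s ∘ q)
  rw [← quenchedLaw_zero (κ := κ) (e := e)]
  exact ⟨hw.measure_eq_zero_or_one hp hD hDinv 0,
    (quenchedLaw_one_apply hD).symm.trans (hw.measure_eq_of_liouville hp hD hDinv 1 0)⟩

lemma measurable_measure_scenery (hA : MeasurableSet A) :
    Measurable fun q : (ℤ → β) × (ℤ → ℝ) => κ q.2 {x | q.1 ∘ x ∈ A} :=
  Kernel.measurable_kernel_prodMk_left (κ := κ.comap Prod.snd measurable_snd)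
    (measurable_comp_of_countable.comp
      ((measurable_fst.comp measurable_fst).prodMk measurable_snd) hA)

lemma exists_ae_measure_scenery_eq (hν : ∀ᵐ p ∂ν, p ∈ Ioo 0 1)
    (hκ : ∀ᵐ e ∂Measure.infinitePi fun _ => ν, IsQuenchedLaw e (κ e)) (ρ : Measure β)
    [IsProbabilityMeasure ρ] (hA : MeasurableSet A) (hinv : IsShiftInvariant A) :
    ∃ c : ℝ≥0∞, (c = 0 ∨ c = 1) ∧
      ∀ᵐ q ∂(Measure.infinitePi fun _ : ℤ => ρ).prod (Measure.infinitePi fun _ : ℤ => ν),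
        κ q.2 {x | q.1 ∘ x ∈ A} = c := by
  have hquenched := Measure.quasiMeasurePreserving_snd
    (μ := Measure.infinitePi fun _ : ℤ => ρ).ae (ae_measure_scenery_mem hν hκ hA hinv)
  obtain ⟨c, hc⟩ := ((stronglyMixing_comp_add_one_infinitePi ρ).prod
    (stronglyMixing_comp_add_one_infinitePi ν)).ergodic.quasiErgodic.ae_eq_const_of_ae_eq_comp₀
    (measurable_measure_scenery hA).nullMeasurable (hquenched.mono fun q hq => (hq q.1).2)
  obtain ⟨q, hq, hqc⟩ := (hquenched.and hc).exists
  exact ⟨c, (show κ q.2 {x | q.1 ∘ x ∈ A} = c from hqc) ▸ (hq q.1).1, hc⟩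

lemma measure_scenery_eq_lintegral {Ω : Type*} [MeasurableSpace Ω] {μ : Measure Ω}
    [IsFiniteMeasure μ] {S : Ω → ℤ → β} {E : Ω → ℤ → ℝ} {W : Ω → ℕ → ℤ} (hS : Measurable S)
    (hE : Measurable E) (hW : Measurable W) (hindep : IndepFun S (fun ω => (E ω, W ω)) μ)
    (hA : MeasurableSet A) :
    μ {ω | S ω ∘ W ω ∈ A} =
      ∫⁻ q, condDistrib W E μ q.2 {x | q.1 ∘ x ∈ A} ∂(μ.map S).prod (μ.map E) := by
  have hcomp := measurable_comp_of_countable (α := ℤ) (β := β)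
  have hlaw : μ.map (fun ω => (S ω, (E ω, W ω))) =
      (μ.map S).prod (μ.map E ⊗ₘ condDistrib W E μ) := by
    rw [compProd_map_condDistrib hW.aemeasurable]
    exact (indepFun_iff_map_prod_eq_prod_map_map hS.aemeasurable
      (hE.prodMk hW).aemeasurable).1 hindep
  have hevent : MeasurableSet {q : (ℤ → β) × (ℤ → ℝ) × (ℕ → ℤ) | q.1 ∘ q.2.2 ∈ A} :=
    (hcomp.comp (measurable_fst.prodMk (measurable_snd.comp measurable_snd))) hA
  calc μ {ω | S ω ∘ W ω ∈ A}
    _ = μ.map (fun ω => (S ω, (E ω, W ω))) {q | q.1 ∘ q.2.2 ∈ A} :=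
      (Measure.map_apply (hS.prodMk (hE.prodMk hW)) hevent).symm
    _ = ∫⁻ s, (μ.map E ⊗ₘ condDistrib W E μ) {r | s ∘ r.2 ∈ A} ∂μ.map S := by
      rw [hlaw, Measure.prod_apply hevent]; rfl
    _ = ∫⁻ s, ∫⁻ e, condDistrib W E μ e {x | s ∘ x ∈ A} ∂μ.map E ∂μ.map S :=
      lintegral_congr fun s => Measure.compProd_apply (measurable_prodMk_left hevent)
    _ = ∫⁻ q, condDistrib W E μ q.2 {x | q.1 ∘ x ∈ A} ∂(μ.map S).prod (μ.map E) :=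
      (lintegral_prod _ (measurable_measure_scenery hA).aemeasurable).symm

end ZeroOneLaw

theorem stmt19_general {Ω β : Type*} [MeasurableSpace Ω] [MeasurableSpace β] (μ : Measure Ω)
    [IsProbabilityMeasure μ] (env : ℤ → Ω → ℝ) (henv_meas : ∀ i, Measurable (env i))
    (henv_indep : iIndepFun env μ) (henv_ident : ∀ i, IdentDistrib (env i) (env 0) μ μ)
    (henv_mem : ∀ᵐ ω ∂μ, env 0 ω ∈ Ioo 0 1)
    (X : ℕ → Ω → ℤ) (hX_meas : ∀ n, Measurable (X n))
    (hquenched : ∀ (n : ℕ) (x : ℕ → ℤ), x 0 = 0 →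
      μ[Set.indicator {ω | ∀ i ≤ n, X i ω = x i} (fun _ => (1 : ℝ)) |
          MeasurableSpace.comap (fun ω i => env i ω) MeasurableSpace.pi]
        =ᵐ[μ] fun ω => ∏ i ∈ Finset.range n, stepProb (env (x i) ω) (x (i + 1) - x i))
    (sce : ℤ → Ω → β) (hsce_meas : ∀ x, Measurable (sce x)) (hsce_indep : iIndepFun sce μ)
    (hsce_ident : ∀ x, IdentDistrib (sce x) (sce 0) μ μ)
    (hsce_env_walk_indep :
      IndepFun (fun ω x => sce x ω) (fun ω => ((fun i => env i ω), (fun n => X n ω))) μ)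
    {A : Set (ℕ → β)} (hA : MeasurableSet A) (hinv : IsShiftInvariant A) :
    μ {ω | (fun i => sce (X i ω) ω) ∈ A} = 0 ∨ μ {ω | (fun i => sce (X i ω) ω) ∈ A} = 1 := by
  have hE : Measurable fun ω i => env i ω := measurable_pi_lambda _ henv_meas
  have hX : Measurable fun ω n => X n ω := measurable_pi_lambda _ hX_meas
  have hS : Measurable fun ω x => sce x ω := measurable_pi_lambda _ hsce_meas
  have hmapE := map_eq_infinitePi_of_iid henv_meas henv_indep 0 henv_ident
  have hmapS := map_eq_infinitePi_of_iid hsce_meas hsce_indep 0 hsce_ident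
  have := Measure.isProbabilityMeasure_map (μ := μ) (henv_meas 0).aemeasurable
  have := Measure.isProbabilityMeasure_map (μ := μ) (hsce_meas 0).aemeasurable
  have hν : ∀ᵐ p ∂μ.map (env 0), p ∈ Ioo 0 1 :=
    (ae_map_iff (henv_meas 0).aemeasurable measurableSet_Ioo).2 henv_mem
  have hcyl (n : ℕ) (x : ℕ → ℤ) :
      {ω | ∀ i ≤ n, X i ω = x i} = (fun ω n => X n ω) ⁻¹' PiNat.cylinder x (n + 1) := by
    simp only [PiNat.cylinder, preimage_ofPred_eq, Nat.lt_succ_iff]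
  have hκ := ae_isQuenchedLaw_condDistrib hE hX (hmapE ▸ ae_forall_infinitePi _ hν)
    (by simpa only [hcyl] using hquenched)
  obtain ⟨c, hc, hae⟩ := exists_ae_measure_scenery_eq hν (hmapE ▸ hκ) (μ.map (sce 0)) hA hinv
  have hμ : μ {ω | (fun i => sce (X i ω) ω) ∈ A} = c := by
    have hprob := measure_scenery_eq_lintegral hS hE hX hsce_env_walk_indep hA
    rw [hmapS, hmapE, lintegral_congr_ae hae] at hprob
    simpa [Function.comp_def] using hprob
  rwa [hμ]

/-- Zero–one law: if `a := ess sup ξ₀ < ∞`, then for every `c ∈ [−∞, +∞]`, the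
probability `ℙ⊗Q{limsup_{n→∞} Z_n/n = c}` is `0` or `1`. -/
theorem stmt19 {Ω : Type*} [MeasurableSpace Ω] (μ : Measure Ω) [IsProbabilityMeasure μ]
    -- the i.i.d. environment
    (env : ℤ → Ω → ℝ) (henv_meas : ∀ i, Measurable (env i))
    (henv_indep : iIndepFun (m := fun _ : ℤ => (inferInstance : MeasurableSpace ℝ)) env μ)
    (henv_ident : ∀ i, IdentDistrib (env i) (env 0) μ μ)
    (δ : ℝ) (hδ0 : 0 < δ) (hδ1 : δ < 1 / 2)
    (henv_ell : ∀ i, ∀ᵐ ω ∂μ, δ ≤ env i ω ∧ env i ω ≤ 1 - δ)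
    (henv_mean : ∫ ω, Real.log ((1 - env 0 ω) / env 0 ω) ∂μ = 0)
    (henv_var : 0 < variance (fun ω => Real.log ((1 - env 0 ω) / env 0 ω)) μ)
    -- Sinai's walk: a nearest-neighbour Markov chain in the environment `env`,
    -- characterized by its quenched cylinder probabilities given `σ(env)`
    (X : ℕ → Ω → ℤ) (hX_meas : ∀ n, Measurable (X n))
    (hX0 : ∀ᵐ ω ∂μ, X 0 ω = 0)
    (hquenched : ∀ (n : ℕ) (x : ℕ → ℤ), x 0 = 0 →
      μ[Set.indicator {ω | ∀ i ≤ n, X i ω = x i} (fun _ => (1 : ℝ)) |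
          MeasurableSpace.comap (fun ω i => env i ω) MeasurableSpace.pi]
        =ᵐ[μ] fun ω => ∏ i ∈ Finset.range n, stepProb (env (x i) ω) (x (i + 1) - x i))
    -- the i.i.d. scenery, independent of the environment and of the walk
    (sce : ℤ → Ω → ℝ) (hsce_meas : ∀ x, Measurable (sce x))
    (hsce_indep : iIndepFun (m := fun _ : ℤ => (inferInstance : MeasurableSpace ℝ)) sce μ)
    (hsce_ident : ∀ x, IdentDistrib (sce x) (sce 0) μ μ)
    (hsce_env_walk_indep :
      IndepFun (fun ω => (fun x : ℤ => sce x ω))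
        (fun ω => ((fun i : ℤ => env i ω), (fun n : ℕ => X n ω))) μ)
    -- `a := ess sup ξ₀ < ∞`
    (a : ℝ) (ha : a = essSup (fun ω => sce 0 ω) μ) (ha_fin : ∀ᵐ ω ∂μ, sce 0 ω ≤ a) :
    ∀ c : EReal,
      μ {ω | Filter.atTop.limsup
          (fun n : ℕ =>
            (((∑ i ∈ Finset.range (n + 1), sce (X i ω) ω) / (n : ℝ) : ℝ) : EReal)) = c}
        = 0 ∨
      μ {ω | Filter.atTop.limsup
          (fun n : ℕ =>
            (((∑ i ∈ Finset.range (n + 1), sce (X i ω) ω) / (n : ℝ) : ℝ) : EReal)) = c}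
        = 1 := by
  intro c
  refine stmt19_general μ env henv_meas henv_indep henv_ident ?_ X hX_meas hquenched sce hsce_meas
    hsce_indep hsce_ident hsce_env_walk_indep (measurable_limsupAverage (measurableSet_singleton c))
    fun u => by rw [mem_preimage, limsupAverage_comp_succ, mem_preimage]
  filter_upwards [henv_ell 0] with ω hω using ⟨hδ0.trans_le hω.1, by linarith⟩
end
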